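/- arXiv:2512.08151 — 2 statements merged into one kernel-verified Lean document; each statement's English description precedes it below -/
import Mathlib

section
/- For i = 1, 2, let Γ_i be a finitely generated virtually abelian group, and let ν be an aperiodic probability measure on Γ₁×Γ₂ with finite second moment whose support generates Γ₁×Γ₂ as a semigroup; let μ^{(i)} denote the marginal of ν on Γ_i (μ^{(1)}(γ₁) = ∑_{γ₂} ν(γ₁,γ₂) and μ^{(2)}(γ₂) = ∑_{γ₁} ν(γ₁,γ₂)). If every group homomorphism from Γ₁ to ℤ is the zero homomorphism, then ‖ν_n − μ^{(1)}_n × μ^{(2)}_n‖_TV → 0 as n → ∞. -/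
open scoped BigOperators Classical
open Filter Matrix MeasureTheory

namespace NSVA

noncomputable section

/-- Convolution of two real-valued functions on a group. -/
def conv {G : Type*} [Group G] (μ ν : G → ℝ) : G → ℝ :=
  fun g => ∑' h : G, μ h * ν (h⁻¹ * g)

/-- Convolution powers: `convPow μ 0 = δ_1`, `convPow μ (n+1) = (convPow μ n) * μ`. -/
def convPow {G : Type*} [Group G] (μ : G → ℝ) : ℕ → G → ℝ
  | 0 => fun g => if g = 1 then 1 else 0
  | n + 1 => conv (convPow μ n) μ

/-- A probability measure on a countable set, viewed as a function. -/
def IsProb {G : Type*} (μ : G → ℝ) : Prop := (∀ g, 0 ≤ μ g) ∧ HasSum μ 1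

/-- The support of `μ` generates the group as a semigroup. -/
def Nondeg {G : Type*} [Group G] (μ : G → ℝ) : Prop :=
  ∀ g : G, g ∈ Subsemigroup.closure {x : G | 0 < μ x}

/-- `μ` is aperiodic: `μ_n(1) > 0` for all large enough `n`. -/
def Aperiodic {G : Type*} [Group G] (μ : G → ℝ) : Prop :=
  ∃ N : ℕ, ∀ n : ℕ, N ≤ n → 0 < convPow μ n 1

/-- Total variation distance between two (probability) functions. -/
def tv {Z : Type*} (p q : Z → ℝ) : ℝ := (1 / 2) * ∑' z : Z, |p z - q z|

/-- Word length with respect to a finite set `S₀`. -/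
def wordLength {G : Type*} [Group G] (S₀ : Finset G) (g : G) : ℕ :=
  sInf {n : ℕ | ∃ l : List G, (∀ s ∈ l, s ∈ S₀) ∧ l.length = n ∧ l.prod = g}

/-- Finite second moment with respect to a word metric given by a finite symmetric
generating set. -/
def FinSecondMoment {G : Type*} [Group G] (μ : G → ℝ) : Prop :=
  ∃ S₀ : Finset G, (∀ s ∈ S₀, s⁻¹ ∈ S₀) ∧ Subgroup.closure (S₀ : Set G) = ⊤ ∧
    Summable (fun g : G => (wordLength S₀ g : ℝ) ^ 2 * μ g)

/-- A group is virtually abelian if it has an abelian subgroup of finite index. -/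
def VirtAbelian (G : Type*) [Group G] : Prop :=
  ∃ A : Subgroup G, A.index ≠ 0 ∧ ∀ a b : A, a * b = b * a

/-- The noised measure `π^ρ` on `G × G`. -/
def noised {G : Type*} (μ : G → ℝ) (ρ : ℝ) : G × G → ℝ :=
  fun p => ρ * μ p.1 * μ p.2 + (1 - ρ) * μ p.1 * (if p.1 = p.2 then 1 else 0)

/-- First marginal of a measure on a product. -/
def marg1 {G₁ G₂ : Type*} (ν : G₁ × G₂ → ℝ) : G₁ → ℝ := fun γ₁ => ∑' γ₂ : G₂, ν (γ₁, γ₂)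

/-- Second marginal of a measure on a product. -/
def marg2 {G₁ G₂ : Type*} (ν : G₁ × G₂ → ℝ) : G₂ → ℝ := fun γ₂ => ∑' γ₁ : G₁, ν (γ₁, γ₂)

/-- A system of representatives of the right cosets `Λ\Γ` containing the identity,
together with the representative map `rep`, constant on right cosets. -/
structure RepSystem {Γ : Type*} [Group Γ] (Λ : Subgroup Γ) where
  Δ : Finset Γ
  one_mem : (1 : Γ) ∈ Δ
  rep : Γ → Γ
  rep_mem : ∀ γ : Γ, rep γ ∈ Δ
  rep_spec : ∀ γ : Γ, γ * (rep γ)⁻¹ ∈ Λ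
  rep_idem : ∀ x ∈ Δ, rep x = x
  rep_coset : ∀ γ : Γ, ∀ v ∈ Λ, rep (v * γ) = rep γ

variable {Γ : Type*} [Group Γ] {Λ : Subgroup Γ} {m : ℕ}

/-- The cocycle `α(x,s) = ψ(x·s·(x^s)⁻¹) ∈ ℤ^m`. -/
def cocycle (ψ : Λ ≃* Multiplicative (Fin m → ℤ)) (R : RepSystem Λ) (x s : Γ) : Fin m → ℤ :=
  Multiplicative.toAdd (ψ ⟨x * s * (R.rep (x * s))⁻¹, R.rep_spec (x * s)⟩)

/-- The transfer homomorphism `θ(γ) = ∑_{x∈Δ} α(x,γ)`. -/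
def transfer (ψ : Λ ≃* Multiplicative (Fin m → ℤ)) (R : RepSystem Λ) (γ : Γ) : Fin m → ℤ :=
  ∑ x ∈ R.Δ, cocycle ψ R x γ

/-- `Φ(γ) = ψ(v)` where `γ = v·x`, `v ∈ Λ`, `x ∈ Δ`. -/
def Phi (ψ : Λ ≃* Multiplicative (Fin m → ℤ)) (R : RepSystem Λ) (γ : Γ) : Fin m → ℤ :=
  Multiplicative.toAdd (ψ ⟨γ * (R.rep γ)⁻¹, R.rep_spec γ⟩)

/-- A 1-form on the quotient diagram. -/
def IsOneForm (R : RepSystem Λ) (ω : Γ → Γ → ℝ) : Prop :=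
  ∀ x ∈ R.Δ, ∀ s : Γ, ω (R.rep (x * s)) s⁻¹ = -ω x s

/-- `χ(ω) = ∑_{x∈Δ} ∑_s c(x,s)·ω(x,s)` where `c(x,s) = μ(s)/#F`. -/
def chi (R : RepSystem Λ) (μ : Γ → ℝ) (ω : Γ → Γ → ℝ) : ℝ :=
  ∑ x ∈ R.Δ, ∑' s : Γ, μ s / (Λ.index : ℝ) * ω x s

/-- Square-integrability of a 1-form. -/
def SqInt (R : RepSystem Λ) (μ : Γ → ℝ) (ω : Γ → Γ → ℝ) : Prop :=
  ∀ x ∈ R.Δ, Summable (fun s : Γ => μ s / (Λ.index : ℝ) * ω x s ^ 2)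

/-- Harmonicity of a (square-integrable) 1-form. -/
def Harmonic (R : RepSystem Λ) (μ : Γ → ℝ) (ω : Γ → Γ → ℝ) : Prop :=
  SqInt R μ ω ∧ ∀ x ∈ R.Δ, (∑' s : Γ, μ s * ω x s) = chi R μ ω

/-- The differential `df(x,s) = f(x^s) − f(x)`. -/
def dd (R : RepSystem Λ) (f : Γ → ℝ) : Γ → Γ → ℝ := fun x s => f (R.rep (x * s)) - f x

/-- `(u, f)` is a harmonic decomposition of the 1-form `ω`: `ω = u + df` with `u`
a harmonic 1-form. -/
def IsHarmDecomp (R : RepSystem Λ) (μ : Γ → ℝ) (ω u : Γ → Γ → ℝ) (f : Γ → ℝ) : Prop :=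
  IsOneForm R u ∧ Harmonic R μ u ∧ ∀ x ∈ R.Δ, ∀ s : Γ, ω x s = u x s + dd R f x s

/-- The 1-form `v̂(x,s) = ⟨v, α(x,s)⟩` (standard inner product). -/
def vhat (ψ : Λ ≃* Multiplicative (Fin m → ℤ)) (R : RepSystem Λ) (v : Fin m → ℝ) :
    Γ → Γ → ℝ :=
  fun x s => ∑ i, v i * (cocycle ψ R x s i : ℝ)

/-- The 1-form `v̂(x,s) = B(v, α(x,s))` for a bilinear form `B`. -/
def vhatB (ψ : Λ ≃* Multiplicative (Fin m → ℤ)) (R : RepSystem Λ)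
    (B : (Fin m → ℝ) →ₗ[ℝ] (Fin m → ℝ) →ₗ[ℝ] ℝ) (v : Fin m → ℝ) : Γ → Γ → ℝ :=
  fun x s => B v (fun i => (cocycle ψ R x s i : ℝ))

/-- The drift `ζ = (1/#F)·∑_{x∈Δ}∑_s μ(s)·α(x,s) ∈ ℝ^m`. -/
def drift (ψ : Λ ≃* Multiplicative (Fin m → ℤ)) (R : RepSystem Λ) (μ : Γ → ℝ) : Fin m → ℝ :=
  fun i => (Λ.index : ℝ)⁻¹ * ∑ x ∈ R.Δ, ∑' s : Γ, μ s * (cocycle ψ R x s i : ℝ)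

/-- The covariance pairing `∑_{x,s} c(x,s)·u(x,s)·u'(x,s) − χ(u)·χ(u')`. -/
def cov (R : RepSystem Λ) (μ : Γ → ℝ) (u u' : Γ → Γ → ℝ) : ℝ :=
  (∑ x ∈ R.Δ, ∑' s : Γ, μ s / (Λ.index : ℝ) * (u x s * u' x s)) - chi R μ u * chi R μ u'

/-- The transfer operator `ℒ_v` acting on functions `Δ → ℂ`. -/
def transferOp (ψ : Λ ≃* Multiplicative (Fin m → ℤ)) (R : RepSystem Λ) (μ : Γ → ℝ)
    (v : Fin m → ℝ) (f : Γ → ℂ) : Γ → ℂ :=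
  fun x => ∑' s : Γ, (μ s : ℂ) *
    Complex.exp (2 * Real.pi * Complex.I * ((∑ i, v i * (cocycle ψ R x s i : ℝ)) : ℝ)) *
    f (R.rep (x * s))

/-- The Gaussian density `ξ_A(w)` associated with a (positive-definite) matrix `A`. -/
def gauss {d : ℕ} (A : Matrix (Fin d) (Fin d) ℝ) (w : Fin d → ℝ) : ℝ :=
  (2 * Real.pi) ^ (-(d : ℝ) / 2) * A.det ^ (-(1 : ℝ) / 2) *
    Real.exp (-(w ⬝ᵥ A⁻¹.mulVec w) / 2)

/-- The product representative system for `Λ₁ × Λ₂ ≤ Γ₁ × Γ₂`. -/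
def prodRep {Γ₁ : Type*} [Group Γ₁] {Γ₂ : Type*} [Group Γ₂]
    {Λ₁ : Subgroup Γ₁} {Λ₂ : Subgroup Γ₂}
    (R₁ : RepSystem Λ₁) (R₂ : RepSystem Λ₂) : RepSystem (Λ₁.prod Λ₂) where
  Δ := R₁.Δ ×ˢ R₂.Δ
  one_mem := Finset.mem_product.mpr ⟨R₁.one_mem, R₂.one_mem⟩
  rep := fun p => (R₁.rep p.1, R₂.rep p.2)
  rep_mem := fun p => Finset.mem_product.mpr ⟨R₁.rep_mem p.1, R₂.rep_mem p.2⟩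
  rep_spec := fun p => Subgroup.mem_prod.mpr ⟨R₁.rep_spec p.1, R₂.rep_spec p.2⟩
  rep_idem := fun x hx => by
    rcases Finset.mem_product.mp hx with ⟨h1, h2⟩
    exact Prod.ext_iff.mpr ⟨R₁.rep_idem x.1 h1, R₂.rep_idem x.2 h2⟩
  rep_coset := fun p v hv => by
    rcases Subgroup.mem_prod.mp hv with ⟨h1, h2⟩
    exact Prod.ext_iff.mpr ⟨R₁.rep_coset p.1 v.1 h1, R₂.rep_coset p.2 v.2 h2⟩

/-- The 1-form `𝐯̂(x,s) = ⟨𝐯, α(x,s)⟩` on a product, standard inner product. -/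
def vhat2 {Γ₁ : Type*} [Group Γ₁] {Γ₂ : Type*} [Group Γ₂]
    {Λ₁ : Subgroup Γ₁} {Λ₂ : Subgroup Γ₂} {m₁ m₂ : ℕ}
    (ψ₁ : Λ₁ ≃* Multiplicative (Fin m₁ → ℤ)) (R₁ : RepSystem Λ₁)
    (ψ₂ : Λ₂ ≃* Multiplicative (Fin m₂ → ℤ)) (R₂ : RepSystem Λ₂)
    (v : (Fin m₁ → ℝ) × (Fin m₂ → ℝ)) : (Γ₁ × Γ₂) → (Γ₁ × Γ₂) → ℝ :=
  fun x s => (∑ i, v.1 i * (cocycle ψ₁ R₁ x.1 s.1 i : ℝ)) +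
    ∑ i, v.2 i * (cocycle ψ₂ R₂ x.2 s.2 i : ℝ)

/-- The 1-form `𝐯̂(x,s) = ⟨𝐯, α(x,s)⟩` on a product, orthogonal-sum of the two
bilinear forms `B₁`, `B₂`. -/
def vhatB2 {Γ₁ : Type*} [Group Γ₁] {Γ₂ : Type*} [Group Γ₂]
    {Λ₁ : Subgroup Γ₁} {Λ₂ : Subgroup Γ₂} {m₁ m₂ : ℕ}
    (ψ₁ : Λ₁ ≃* Multiplicative (Fin m₁ → ℤ)) (R₁ : RepSystem Λ₁)
    (B₁ : (Fin m₁ → ℝ) →ₗ[ℝ] (Fin m₁ → ℝ) →ₗ[ℝ] ℝ)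
    (ψ₂ : Λ₂ ≃* Multiplicative (Fin m₂ → ℤ)) (R₂ : RepSystem Λ₂)
    (B₂ : (Fin m₂ → ℝ) →ₗ[ℝ] (Fin m₂ → ℝ) →ₗ[ℝ] ℝ)
    (v : (Fin m₁ → ℝ) × (Fin m₂ → ℝ)) : (Γ₁ × Γ₂) → (Γ₁ × Γ₂) → ℝ :=
  fun x s => B₁ v.1 (fun i => (cocycle ψ₁ R₁ x.1 s.1 i : ℝ)) +
    B₂ v.2 (fun i => (cocycle ψ₂ R₂ x.2 s.2 i : ℝ))

end

section Expectation

variable {G : Type*} {p : G → ℝ} {E : Type*} [NormedAddCommGroup E] [NormedSpace ℝ E]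

lemma IsProb.le_one (hp : IsProb p) (g : G) : p g ≤ 1 :=
  le_hasSum hp.2 g fun j _ => hp.1 j

lemma IsProb.tsum_eq (hp : IsProb p) : ∑' g, p g = 1 := hp.2.tsum_eq

lemma IsProb.summable_smul [CompleteSpace E] (hp : IsProb p) {f : G → E} {C : ℝ} (hf : ∀ g, ‖f g‖ ≤ C) :
    Summable fun g => p g • f g := by
  refine Summable.of_norm_bounded (hp.2.summable.mul_right C) fun g => ?_
  rw [norm_smul, Real.norm_of_nonneg (hp.1 g)]
  exact mul_le_mul_of_nonneg_left (hf g) (hp.1 g)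

lemma IsProb.norm_tsum_smul_le (hp : IsProb p) {f : G → E} {C : ℝ} (hf : ∀ g, ‖f g‖ ≤ C) :
    ‖∑' g, p g • f g‖ ≤ C := by
  have h := hp.2.mul_right C
  rw [one_mul] at h
  refine tsum_of_norm_bounded h fun g => ?_
  rw [norm_smul, Real.norm_of_nonneg (hp.1 g)]
  exact mul_le_mul_of_nonneg_left (hf g) (hp.1 g)

end Expectation

section Convolution

variable {G : Type*} [Group G] {p q : G → ℝ} {E : Type*} [NormedAddCommGroup E] [NormedSpace ℝ E]

lemma summable_conv_term (hp : IsProb p) (hq : IsProb q) (g : G) :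
    Summable fun h => p h * q (h⁻¹ * g) := by
  refine Summable.of_nonneg_of_le (fun h => mul_nonneg (hp.1 _) (hq.1 _)) (fun h => ?_)
    hp.2.summable
  exact mul_le_of_le_one_right (hp.1 _) (hq.le_one _)

/-- The shear `(g, h) ↦ (h, h⁻¹ g)`. -/
def shear (G : Type*) [Group G] : G × G ≃ G × G where
  toFun z := (z.2, z.2⁻¹ * z.1)
  invFun z := (z.1 * z.2, z.1)
  left_inv z := by simp
  right_inv z := by simp

lemma summable_conv_aux (hp : IsProb p) (hq : IsProb q) {f : G → E}
    (h : Summable fun z : G × G => (p z.1 * q z.2) • f (z.1 * z.2)) :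
    (Summable fun z : G × G => (p z.2 * q (z.2⁻¹ * z.1)) • f z.1) ∧
      ∀ g, ∑' h, (p h * q (h⁻¹ * g)) • f g = conv p q g • f g := by
  refine ⟨?_, fun g => ?_⟩
  · have := (shear G).summable_iff.2 h
    refine this.congr fun z => ?_
    simp [shear]
  · exact (summable_conv_term hp hq g).tsum_smul_const _

lemma summable_conv_smul [CompleteSpace E] (hp : IsProb p) (hq : IsProb q) {f : G → E}
    (h : Summable fun z : G × G => (p z.1 * q z.2) • f (z.1 * z.2)) :
    Summable fun g => conv p q g • f g := by
  obtain ⟨h1, h2⟩ := summable_conv_aux hp hq h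
  exact h1.prod.congr h2

lemma tsum_conv_smul [CompleteSpace E] (hp : IsProb p) (hq : IsProb q) {f : G → E}
    (h : Summable fun z : G × G => (p z.1 * q z.2) • f (z.1 * z.2)) :
    ∑' g, conv p q g • f g = ∑' h, p h • ∑' s, q s • f (h * s) := by
  obtain ⟨h1, h2⟩ := summable_conv_aux hp hq h
  calc ∑' g, conv p q g • f g
      = ∑' g, ∑' h, (p h * q (h⁻¹ * g)) • f g := (tsum_congr h2).symm
    _ = ∑' z : G × G, (p z.2 * q (z.2⁻¹ * z.1)) • f z.1 := h1.tsum_prod.symm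
    _ = ∑' z : G × G, (p z.1 * q z.2) • f (z.1 * z.2) := by
        rw [← (shear G).tsum_eq fun z : G × G => (p z.1 * q z.2) • f (z.1 * z.2)]
        simp [shear]
    _ = ∑' h, ∑' s, (p h * q s) • f (h * s) := h.tsum_prod
    _ = _ := by
        refine tsum_congr fun a => ?_
        simp_rw [mul_smul]
        rw [tsum_const_smul'']

lemma summable_mul_smul_of_bounded [CompleteSpace E] (hp : IsProb p) (hq : IsProb q) {f : G → E} {C : ℝ}
    (hf : ∀ g, ‖f g‖ ≤ C) :
    Summable fun z : G × G => (p z.1 * q z.2) • f (z.1 * z.2) := by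
  have h0 := hp.2.summable.mul_of_nonneg hq.2.summable hp.1 hq.1
  refine Summable.of_norm_bounded (h0.mul_right C) fun z => ?_
  have := mul_nonneg (hp.1 z.1) (hq.1 z.2)
  rw [norm_smul, Real.norm_of_nonneg this]
  exact mul_le_mul_of_nonneg_left (hf _) this

lemma isProb_conv (hp : IsProb p) (hq : IsProb q) : IsProb (conv p q) := by
  have hb := summable_mul_smul_of_bounded hp hq (f := fun _ : G => (1 : ℝ)) (C := 1)
    fun _ => norm_one.le
  have h1 : Summable (conv p q) := by
    simpa only [smul_eq_mul, mul_one] using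
      summable_conv_smul (f := fun _ : G => (1 : ℝ)) hp hq hb
  have h2 : ∑' g, conv p q g = 1 := by
    have h3 := tsum_conv_smul (f := fun _ : G => (1 : ℝ)) hp hq hb
    simp only [smul_eq_mul, mul_one] at h3
    rw [h3, hq.tsum_eq]
    simp only [mul_one]
    exact hp.tsum_eq
  refine ⟨fun g => tsum_nonneg fun h => mul_nonneg (hp.1 _) (hq.1 _), ?_⟩
  rw [← h2]
  exact h1.hasSum

lemma isProb_convPow (hp : IsProb p) (n : ℕ) : IsProb (convPow p n) := by
  induction n with
  | zero =>
    refine ⟨fun g => ?_, ?_⟩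
    · simp only [convPow]; split_ifs <;> simp
    · exact hasSum_ite_eq 1 1
  | succ n ih => exact isProb_conv ih hp

lemma conv_pos_iff (hp : IsProb p) (hq : IsProb q) (g : G) :
    0 < conv p q g ↔ ∃ h, 0 < p h ∧ 0 < q (h⁻¹ * g) := by
  constructor
  · intro h
    by_contra! hc
    refine h.ne' ?_
    have : ∀ h, p h * q (h⁻¹ * g) = 0 := fun h => by
      rcases (hp.1 h).eq_or_lt with h0 | h0
      · rw [← h0, zero_mul]
      · rw [le_antisymm (hc h h0) (hq.1 _), mul_zero]
    simp [conv, this]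
  · rintro ⟨h, h1, h2⟩
    exact (summable_conv_term hp hq g).tsum_pos (fun h => mul_nonneg (hp.1 _) (hq.1 _)) h
      (mul_pos h1 h2)

lemma convPow_one (p : G → ℝ) : convPow p 1 = p := by
  funext g
  simp only [convPow, conv]
  rw [tsum_eq_single 1]
  · simp
  · intro b hb; simp [hb]

lemma convPow_add_pos (hp : IsProb p) {m n : ℕ} {g h : G} (hg : 0 < convPow p m g)
    (hh : 0 < convPow p n h) : 0 < convPow p (m + n) (g * h) := by
  induction n generalizing h with
  | zero =>
    have : h = 1 := by
      by_contra hc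
      simp [convPow, hc] at hh
    simpa [this] using hg
  | succ n ih =>
    obtain ⟨k, h1, h2⟩ := (conv_pos_iff (isProb_convPow hp n) hp h).1 hh
    refine (conv_pos_iff (isProb_convPow hp (m + n)) hp _).2 ⟨g * k, ih h1, ?_⟩
    simpa [mul_assoc] using h2

/-- Every element is charged by all sufficiently large convolution powers. -/
def EventuallyPos (p : G → ℝ) : Prop := ∀ g, ∀ᶠ n in atTop, 0 < convPow p n g

lemma eventuallyPos_of_nondeg (hp : IsProb p) (ha : Aperiodic p) (hn : Nondeg p) :
    EventuallyPos p := by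
  have key : ∀ g : G, ∃ n, 0 < convPow p n g := fun g => by
    induction hn g using Subsemigroup.closure_induction with
    | mem x hx => exact ⟨1, by simpa [convPow_one] using hx⟩
    | mul x y _ _ hx hy =>
      obtain ⟨m, hm⟩ := hx
      obtain ⟨n, hn⟩ := hy
      exact ⟨m + n, convPow_add_pos hp hm hn⟩
  intro g
  obtain ⟨k, hk⟩ := key g
  obtain ⟨N, hN⟩ := ha
  filter_upwards [eventually_ge_atTop (N + k)] with n hn
  have := convPow_add_pos hp hk (hN (n - k) (by omega))
  rwa [mul_one, Nat.add_sub_cancel' (by omega)] at this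

end Convolution

lemma exists_pos_le_of_finite {Z : Type*} [Finite Z] (F : Z → ℝ) (hF : ∀ z, 0 < F z) :
    ∃ a > 0, ∀ z, a ≤ F z := by
  rcases isEmpty_or_nonempty Z with h | h
  · exact ⟨1, one_pos, fun z => h.elim z⟩
  · obtain ⟨z, hz⟩ := Finite.exists_min F
    exact ⟨F z, hF z, hz⟩

/-- If `p` has mass at least `a` at each point of `S`, the uniform part of mass `a` on `S` can be
averaged separately. -/
lemma IsProb.norm_tsum_smul_le_of_le {G : Type*} {p : G → ℝ} {E : Type*} [NormedAddCommGroup E]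
    [NormedSpace ℝ E] [CompleteSpace E] (hp : IsProb p) {f : G → E} {C : ℝ}
    (hf : ∀ g, ‖f g‖ ≤ C) (S : Finset G) {a : ℝ} (ha : 0 ≤ a) (hS : ∀ g ∈ S, a ≤ p g) :
    ‖∑' g, p g • f g‖ ≤ (1 - a * S.card) * C + a * ‖∑ g ∈ S, f g‖ := by
  set r : G → ℝ := fun g => if g ∈ S then a else 0 with hr
  have hr0 : ∀ g ∉ S, r g = 0 := fun g hg => by simp [hr, hg]
  have hrs : HasSum r (a * S.card) := by
    have : HasSum r (∑ g ∈ S, r g) := hasSum_sum_of_ne_finset_zero hr0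
    have h2 : ∑ g ∈ S, r g = a * S.card := by
      rw [Finset.sum_congr rfl fun g hg => if_pos hg]
      simp [mul_comm]
    rwa [h2] at this
  have hrf : HasSum (fun g => r g • f g) (a • ∑ g ∈ S, f g) := by
    have : HasSum (fun g => r g • f g) (∑ g ∈ S, r g • f g) :=
      hasSum_sum_of_ne_finset_zero fun g hg => by simp [hr0 g hg]
    rw [Finset.smul_sum]
    rwa [Finset.sum_congr rfl fun g hg => congrArg (· • f g) (if_pos hg)] at this
  have hpf := (hp.summable_smul hf).hasSum
  have hd := hpf.sub hrf
  have hpr : ∀ g, 0 ≤ p g - r g := fun g => by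
    by_cases hg : g ∈ S
    · simpa [hr, hg] using hS g hg
    · simpa [hr, hg] using hp.1 g
  have hb : ‖∑' g, p g • f g - a • ∑ g ∈ S, f g‖ ≤ (1 - a * S.card) * C := by
    rw [← hd.tsum_eq]
    refine tsum_of_norm_bounded ((hp.2.sub hrs).mul_right C) fun g => ?_
    rw [← sub_smul, norm_smul, Real.norm_of_nonneg (hpr g)]
    exact mul_le_mul_of_nonneg_left (hf g) (hpr g)
  have := norm_add_le (∑' g, p g • f g - a • ∑ g ∈ S, f g) (a • ∑ g ∈ S, f g)
  rw [sub_add_cancel, norm_smul, Real.norm_of_nonneg ha] at this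
  linarith

/-- A right action of `G` on `X` with a `ℤ^ι`-valued cocycle which, from every base point,
identifies `G` with `X × ℤ^ι`. -/
structure LatticeCocycle (G X ι : Type*) [Group G] where
  act : X → G → X
  val : X → G → ι → ℤ
  act_one : ∀ x, act x 1 = x
  act_mul : ∀ x g h, act x (g * h) = act (act x g) h
  val_mul : ∀ x g h, val x (g * h) = val x g + val (act x g) h
  bij : ∀ x, Function.Bijective fun g => (act x g, val x g)

lemma norm_twist_term_le {G X : Type*} [Fintype X] {u : X → G → ℂ} {act : X → G → X}
    (hu : ∀ x g, ‖u x g‖ ≤ 1) (f : X → ℂ) (x : X) (g : G) : ‖u x g * f (act x g)‖ ≤ ‖f‖ := by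
  rw [norm_mul]
  exact (mul_le_of_le_one_left (norm_nonneg _) (hu x g)).trans (norm_le_pi_norm f _)

section Twist

variable {G X ι : Type*} [Group G]

lemma LatticeCocycle.val_one (A : LatticeCocycle G X ι) (x : X) : A.val x 1 = 0 := by
  have := A.val_mul x 1 1
  rw [A.act_one, mul_one] at this
  simpa using this

lemma LatticeCocycle.act_bijective (A : LatticeCocycle G X ι) (g : G) :
    Function.Bijective fun x => A.act x g := by
  refine Function.bijective_iff_has_inverse.2 ⟨fun x => A.act x g⁻¹, fun x => ?_, fun x => ?_⟩
  · simp [← A.act_mul, A.act_one]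
  · simp [← A.act_mul, A.act_one]

lemma LatticeCocycle.sum_act [Fintype X] (A : LatticeCocycle G X ι) {M : Type*} [AddCommMonoid M]
    (g : G) (f : X → M) : ∑ x, f (A.act x g) = ∑ x, f x :=
  (A.act_bijective g).sum_comp f

/-- The transition operator of the walk driven by `p`, twisted by `u`. -/
noncomputable def twist (act : X → G → X) (p : G → ℝ) (u : X → G → ℂ) (f : X → ℂ) : X → ℂ :=
  fun x => ∑' g, p g • (u x g * f (act x g))

section

variable {G X : Type*} [Fintype X] {p : G → ℝ} {u : X → G → ℂ}

lemma norm_twist_le {act : X → G → X} (hp : IsProb p) (hu : ∀ x g, ‖u x g‖ ≤ 1) (f : X → ℂ) :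
    ‖twist act p u f‖ ≤ ‖f‖ :=
  (pi_norm_le_iff_of_nonneg (norm_nonneg _)).2 fun x =>
    hp.norm_tsum_smul_le fun g => norm_twist_term_le hu f x g

/-- `twist` as a linear map. -/
noncomputable def twistₗ (act : X → G → X) (hp : IsProb p) (hu : ∀ x g, ‖u x g‖ ≤ 1) :
    (X → ℂ) →ₗ[ℂ] (X → ℂ) where
  toFun := twist act p u
  map_add' f f' := by
    funext x
    simp only [twist, Pi.add_apply]
    rw [← (hp.summable_smul fun g => norm_twist_term_le hu f x g).tsum_add
      (hp.summable_smul fun g => norm_twist_term_le hu f' x g)]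
    exact tsum_congr fun g => by rw [mul_add, smul_add]
  map_smul' c f := by
    funext x
    simp only [twist, Pi.smul_apply, RingHom.id_apply]
    rw [← tsum_const_smul'' c]
    refine tsum_congr fun g => ?_
    simp only [Complex.real_smul, smul_eq_mul]
    ring

lemma twistₗ_pow_apply {act : X → G → X} (hp : IsProb p) (hu : ∀ x g, ‖u x g‖ ≤ 1) (n : ℕ)
    (f : X → ℂ) : (twistₗ act hp hu ^ n) f = (twist act p u)^[n] f :=
  Module.End.pow_apply _ _ _

lemma norm_iterate_twist_le {act : X → G → X} (hp : IsProb p) (hu : ∀ x g, ‖u x g‖ ≤ 1) (n : ℕ)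
    (f : X → ℂ) : ‖(twist act p u)^[n] f‖ ≤ ‖f‖ := by
  induction n with
  | zero => simp
  | succ n ih =>
    rw [Function.iterate_succ_apply']
    exact (norm_twist_le hp hu _).trans ih

end

variable [Fintype X] (A : LatticeCocycle G X ι) {p : G → ℝ} {u : X → G → ℂ}

lemma twist_convPow (hp : IsProb p) (hu : ∀ x g, ‖u x g‖ ≤ 1) (hu1 : ∀ x, u x 1 = 1)
    (hum : ∀ x g h, u x (g * h) = u x g * u (A.act x g) h) (n : ℕ) (f : X → ℂ) :
    twist A.act (convPow p n) u f = (twist A.act p u)^[n] f := by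
  induction n generalizing f with
  | zero =>
    funext x
    simp only [twist, convPow, Function.iterate_zero, id]
    rw [tsum_eq_single 1]
    · simp [hu1, A.act_one]
    · intro g hg; simp [hg]
  | succ n ih =>
    rw [Function.iterate_succ_apply, ← ih]
    funext x
    have hq := isProb_convPow hp n
    have h := tsum_conv_smul hq hp (f := fun g => u x g * f (A.act x g))
      (summable_mul_smul_of_bounded (f := fun g => u x g * f (A.act x g)) hq hp
        fun g => norm_twist_term_le hu f x g)
    simp only [twist, convPow]
    rw [h]
    refine tsum_congr fun g => ?_
    rw [← tsum_mul_left]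
    congr 1
    refine tsum_congr fun s => ?_
    rw [hum, A.act_mul]
    simp only [Complex.real_smul]
    ring

lemma sum_twist_one (hp : IsProb p) (f : X → ℂ) :
    ∑ x, twist A.act p (fun _ _ => 1) f x = ∑ x, f x := by
  simp only [twist, one_mul]
  have hs : ∀ x ∈ Finset.univ, Summable fun g => p g • f (A.act x g) := fun x _ =>
    hp.summable_smul (f := fun g => f (A.act x g)) fun g => norm_le_pi_norm f _
  rw [← Summable.tsum_finsetSum hs]
  simp_rw [← Finset.smul_sum, A.sum_act]
  have h : ∑' g, p g • ∑ x, f x = (∑' g, p g) • ∑ x, f x :=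
    Summable.tsum_smul_const hp.2.summable _
  rw [h, hp.tsum_eq, one_smul]

lemma sum_iterate_twist_one (hp : IsProb p) (f : X → ℂ) (n : ℕ) :
    ∑ x, (twist A.act p (fun _ _ => 1))^[n] f x = ∑ x, f x := by
  induction n with
  | zero => simp
  | succ n ih => rw [Function.iterate_succ_apply', sum_twist_one A hp, ih]

/-- Doeblin contraction on mean-zero functions. -/
lemma exists_contraction_of_sum_eq_zero (hp : IsProb p) (hpos : EventuallyPos p) :
    ∃ K : ℕ, ∃ r : ℝ, r < 1 ∧ 0 ≤ r ∧ ∀ f : X → ℂ, ∑ x, f x = 0 →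
      ‖(twist A.act p fun _ _ => 1)^[K] f‖ ≤ r * ‖f‖ := by
  have hg : ∀ z : X × X, ∃ g, A.act z.1 g = z.2 := fun z => by
    obtain ⟨g, hg⟩ := (A.bij z.1).2 (z.2, 0)
    exact ⟨g, congrArg Prod.fst hg⟩
  choose g hg using hg
  obtain ⟨K, hK⟩ := (eventually_all.2 fun z : X × X => hpos (g z)).exists
  obtain ⟨a, ha, haK⟩ := exists_pos_le_of_finite _ hK
  rcases isEmpty_or_nonempty X with hX | hX
  · exact ⟨0, 0, by simp, le_rfl, fun f _ => by simp [Subsingleton.elim f 0]⟩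
  have hq := isProb_convPow hp K
  refine ⟨K, max (1 - a) 0, by simp [ha], le_max_right _ _, fun f hf => ?_⟩
  rw [← twist_convPow A hp (by simp) (by simp) (by simp)]
  refine (pi_norm_le_iff_of_nonneg (by positivity)).2 fun x => ?_
  have hinj : Function.Injective fun y => g (x, y) := fun y y' h => by
    have h1 := hg (x, y)
    have h2 := hg (x, y')
    simp only at h h1 h2
    rw [← h1, ← h2, h]
  have hb := hq.norm_tsum_smul_le_of_le (f := fun g => 1 * f (A.act x g)) (C := ‖f‖)
    (fun g => norm_twist_term_le (u := fun _ _ => 1) (by simp) f x g)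
    (Finset.univ.image fun y => g (x, y)) ha.le
    (by simpa using fun y => haK (x, y))
  rw [Finset.card_image_of_injective _ hinj, Finset.sum_image hinj.injOn] at hb
  have hg' : ∀ y, A.act x (g (x, y)) = y := fun y => hg (x, y)
  simp only [one_mul, hg', hf, norm_zero, mul_zero, add_zero] at hb
  simp only [twist, one_mul]
  refine hb.trans (mul_le_mul_of_nonneg_right (le_max_of_le_left ?_) (norm_nonneg _))
  have : (1 : ℝ) ≤ (Finset.univ : Finset X).card := by
    exact_mod_cast Finset.card_pos.2 Finset.univ_nonempty
  nlinarith

lemma tendsto_iterate_twist_one (hp : IsProb p) (hpos : EventuallyPos p) (f : X → ℂ)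
    (hf : ∑ x, f x = 0) {ε : ℝ} (hε : 0 < ε) :
    ∃ k, ‖(twist A.act p fun _ _ => 1)^[k] f‖ < ε := by
  obtain ⟨K, r, hr1, hr0, h⟩ := exists_contraction_of_sum_eq_zero A hp hpos
  have hj : ∀ j : ℕ, ‖(twist A.act p fun _ _ => 1)^[K * j] f‖ ≤ r ^ j * ‖f‖ := fun j => by
    induction j with
    | zero => simp
    | succ j ih =>
      rw [Nat.mul_succ, add_comm, Function.iterate_add_apply, pow_succ']
      refine (h _ (by rw [sum_iterate_twist_one A hp, hf])).trans ?_
      rw [mul_assoc]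
      exact mul_le_mul_of_nonneg_left ih hr0
  have ht := (tendsto_pow_atTop_nhds_zero_of_lt_one hr0 hr1).mul_const ‖f‖
  rw [zero_mul] at ht
  obtain ⟨j, hj'⟩ := (ht.eventually (gt_mem_nhds hε)).exists
  exact ⟨K * j, (hj j).trans_lt hj'⟩

/-- Solvability of the Poisson equation. -/
lemma exists_poisson (hp : IsProb p) (hpos : EventuallyPos p) (f : X → ℂ) (hf : ∑ x, f x = 0) :
    ∃ h : X → ℂ, ∀ x, twist A.act p (fun _ _ => 1) h x - h x = f x := by
  rcases isEmpty_or_nonempty X with hX | hX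
  · exact ⟨0, fun x => hX.elim x⟩
  let J : (X → ℂ) →ₗ[ℂ] (X → ℂ) := LinearMap.pi fun _ => ∑ x, LinearMap.proj x
  have hJ : ∀ f x, J f x = ∑ y, f y := fun f x => by simp [J]
  let S := twistₗ A.act hp (u := fun _ _ => 1) (by simp) - LinearMap.id + J
  have hS : ∀ f x, S f x = twist A.act p (fun _ _ => 1) f x - f x + ∑ y, f y := fun f x => by
    simp only [S, LinearMap.add_apply, LinearMap.sub_apply, Pi.add_apply, Pi.sub_apply, hJ]
    rfl
  have hsum : ∀ f, ∑ x, S f x = Fintype.card X * ∑ y, f y := fun f => by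
    simp_rw [hS, Finset.sum_add_distrib, Finset.sum_sub_distrib, sum_twist_one A hp]
    simp
  have hc : (Fintype.card X : ℂ) ≠ 0 := by exact_mod_cast Fintype.card_ne_zero
  have hinj : Function.Injective S := by
    rw [injective_iff_map_eq_zero]
    intro f hf
    have h0 : ∑ y, f y = 0 := by
      have := hsum f
      rw [hf] at this
      simpa [hc] using this.symm
    have h1 : twist A.act p (fun _ _ => 1) f = f := by
      funext x
      have := hS f x
      rw [hf, h0] at this
      exact sub_eq_zero.1 (by simpa using this.symm)
    by_contra hne
    obtain ⟨k, hk⟩ := tendsto_iterate_twist_one A hp hpos f h0 (norm_pos_iff.2 hne)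
    rw [Function.iterate_fixed h1] at hk
    exact lt_irrefl _ hk
  obtain ⟨h, hh⟩ := LinearMap.injective_iff_surjective.1 hinj f
  refine ⟨h, fun x => ?_⟩
  have h0 : ∑ y, h y = 0 := by
    have := hsum h
    rw [hh, hf] at this
    simpa [hc] using this.symm
  have := hS h x
  rw [hh, h0, add_zero] at this
  exact this.symm

end Twist

/-- The character `k ↦ exp(i⟨v, k⟩)` of `ℤ^ι`. -/
noncomputable def chr {ι : Type*} [Fintype ι] (v : ι → ℝ) (k : ι → ℤ) : ℂ :=
  Complex.exp ((∑ i, v i * k i : ℝ) * Complex.I)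

section Character

variable {ι : Type*} [Fintype ι]

lemma norm_chr (v : ι → ℝ) (k : ι → ℤ) : ‖chr v k‖ = 1 := Complex.norm_exp_ofReal_mul_I _

lemma chr_zero (v : ι → ℝ) : chr v 0 = 1 := by simp [chr]

lemma chr_add (v : ι → ℝ) (k l : ι → ℤ) : chr v (k + l) = chr v k * chr v l := by
  simp only [chr, ← Complex.exp_add, ← add_mul, ← Complex.ofReal_add, ← Finset.sum_add_distrib,
    Pi.add_apply, Int.cast_add, mul_add]

lemma chr_single (v : ι → ℝ) (i : ι) : chr v (Pi.single i 1) = Complex.exp (v i * Complex.I) := by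
  simp [chr, Pi.single_apply]

lemma continuous_chr (k : ι → ℤ) : Continuous fun v => chr v k := by
  unfold chr
  fun_prop

end Character

lemma norm_one_add_exp_le {θ : ℝ} (hθ : |θ| ≤ Real.pi) :
    ‖1 + Complex.exp (θ * Complex.I)‖ ≤ 2 - θ ^ 2 / Real.pi ^ 2 := by
  have hpi := Real.pi_pos
  have hy : θ ^ 2 / Real.pi ^ 2 ≤ 1 := by
    rw [div_le_one (by positivity)]
    exact sq_le_sq' (abs_le.1 hθ).1 (abs_le.1 hθ).2
  have hcos := Real.cos_le_one_sub_mul_cos_sq hθ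
  have hn : ‖1 + Complex.exp (θ * Complex.I)‖ ^ 2 = 2 + 2 * Real.cos θ := by
    rw [← Complex.normSq_eq_norm_sq, Complex.normSq_apply, Complex.exp_mul_I]
    simp only [Complex.add_re, Complex.add_im, Complex.one_re, Complex.one_im, Complex.mul_re,
      Complex.mul_im, Complex.I_re, Complex.I_im, ← Complex.ofReal_cos, ← Complex.ofReal_sin,
      Complex.ofReal_re, Complex.ofReal_im]
    nlinarith [Real.sin_sq_add_cos_sq θ]
  refine abs_le_of_sq_le_sq' ?_ (by linarith) |>.2
  rw [hn]
  have : 2 / Real.pi ^ 2 * θ ^ 2 = 2 * (θ ^ 2 / Real.pi ^ 2) := by ring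
  rw [this] at hcos
  nlinarith [sq_nonneg (θ ^ 2 / Real.pi ^ 2)]

section

variable {G X ι : Type*} [Group G] [Fintype X] [Fintype ι] (A : LatticeCocycle G X ι) {p : G → ℝ}

/-- The multiplicative phase `exp(i⟨v, α(x, g)⟩)`. -/
noncomputable def LatticeCocycle.phase (v : ι → ℝ) (x : X) (g : G) : ℂ := chr v (A.val x g)

omit [Fintype X] in
lemma LatticeCocycle.norm_phase_le (v : ι → ℝ) (x : X) (g : G) : ‖A.phase v x g‖ ≤ 1 :=
  (norm_chr _ _).le

lemma twist_phase_convPow (hp : IsProb p) (v : ι → ℝ) (n : ℕ) (f : X → ℂ) :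
    twist A.act (convPow p n) (A.phase v) f = (twist A.act p (A.phase v))^[n] f :=
  twist_convPow A hp (A.norm_phase_le v)
    (fun x => by rw [LatticeCocycle.phase, A.val_one, chr_zero])
    (fun x g h => by simp only [LatticeCocycle.phase, A.val_mul, chr_add]) n f

lemma exists_norm_twist_phase_le (hp : IsProb p) (hpos : EventuallyPos p) :
    ∃ K : ℕ, 0 < K ∧ ∃ c > 0, ∀ v : ι → ℝ, (∀ i, |v i| ≤ Real.pi) → ∀ f : X → ℂ,
      ‖(twist A.act p (A.phase v))^[K] f‖ ≤ Real.exp (-c * ∑ i, v i ^ 2) * ‖f‖ := by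
  have hg : ∀ z : X × ι, ∃ g, A.act z.1 g = z.1 ∧ A.val z.1 g = Pi.single z.2 1 := fun z => by
    obtain ⟨g, hg⟩ := (A.bij z.1).2 (z.1, Pi.single z.2 1)
    exact ⟨g, congrArg Prod.fst hg, congrArg Prod.snd hg⟩
  choose g hg1 hg2 using hg
  obtain ⟨K, hK, hK1, hK0⟩ := ((eventually_all.2 fun z : X × ι => hpos (g z)).and
    ((hpos 1).and (eventually_gt_atTop 0))).exists
  obtain ⟨a, ha, haK⟩ := exists_pos_le_of_finite (fun z : Option (X × ι) =>
    z.elim (convPow p K 1) fun z => convPow p K (g z)) (by rintro (_ | z); exacts [hK1, hK z])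
  have hq := isProb_convPow hp K
  have hsingle : ∀ v : ι → ℝ, (∀ i, |v i| ≤ Real.pi) → ∀ (f : X → ℂ) (i : ι),
      ‖(twist A.act p (A.phase v))^[K] f‖ ≤ Real.exp (-(a / Real.pi ^ 2) * v i ^ 2) * ‖f‖ := by
    intro v hv f i
    rw [← twist_phase_convPow A hp]
    refine (pi_norm_le_iff_of_nonneg (by positivity)).2 fun x => ?_
    have hne : (1 : G) ≠ g (x, i) := fun h => by
      have h2 := hg2 (x, i)
      rw [← h, A.val_one] at h2
      simpa using congrFun h2 i
    have hb := hq.norm_tsum_smul_le_of_le (f := fun g => A.phase v x g * f (A.act x g)) (C := ‖f‖)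
      (fun g => norm_twist_term_le (A.norm_phase_le v) f x g) {1, g (x, i)} ha.le (by
        intro h hh
        rcases Finset.mem_insert.1 hh with rfl | hh
        · exact haK none
        · rw [Finset.mem_singleton.1 hh]; exact haK (some (x, i)))
    have h1 := hg1 (x, i)
    have h2 := hg2 (x, i)
    simp only at h1 h2
    rw [Finset.card_pair hne, Finset.sum_pair hne, LatticeCocycle.phase, LatticeCocycle.phase,
      A.act_one, A.val_one, h1, h2, chr_zero, chr_single, ← add_mul, norm_mul] at hb
    refine hb.trans ?_
    have h3 := norm_one_add_exp_le (hv i)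
    have h4 := Real.add_one_le_exp (-(a / Real.pi ^ 2) * v i ^ 2)
    have h5 : ‖f x‖ ≤ ‖f‖ := norm_le_pi_norm f x
    have h6 := (norm_nonneg _).trans h3
    calc _ ≤ (1 - a * (2 : ℕ)) * ‖f‖ + a * ((2 - v i ^ 2 / Real.pi ^ 2) * ‖f‖) := by gcongr
      _ = (-(a / Real.pi ^ 2) * v i ^ 2 + 1) * ‖f‖ := by push_cast; ring
      _ ≤ _ := by gcongr
  refine ⟨K, hK0, a / Real.pi ^ 2 / (Fintype.card ι + 1), by positivity, fun v hv f => ?_⟩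
  rcases isEmpty_or_nonempty ι with hι | hι
  · simpa using norm_iterate_twist_le hp (A.norm_phase_le v) K f
  · obtain ⟨i, hi⟩ := Finite.exists_max fun i => v i ^ 2
    refine (hsingle v hv f i).trans ?_
    refine mul_le_mul_of_nonneg_right (Real.exp_le_exp.2 ?_) (norm_nonneg _)
    rw [neg_mul, neg_mul, neg_le_neg_iff, div_mul_eq_mul_div, div_le_iff₀ (by positivity), mul_assoc]
    gcongr
    calc ∑ j, v j ^ 2 ≤ ∑ _j : ι, v i ^ 2 := Finset.sum_le_sum fun j _ => hi j
      _ = v i ^ 2 * Fintype.card ι := by simp [mul_comm]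
      _ ≤ _ := by gcongr; linarith

/-- Gaussian domination of the characteristic functions. -/
lemma exists_norm_iterate_twist_phase_le (hp : IsProb p) (hpos : EventuallyPos p) :
    ∃ c > 0, ∀ᶠ n : ℕ in atTop, ∀ v : ι → ℝ, (∀ i, |v i| ≤ Real.pi) → ∀ f : X → ℂ,
      ‖(twist A.act p (A.phase v))^[n] f‖ ≤ Real.exp (-c * (n * ∑ i, v i ^ 2)) * ‖f‖ := by
  obtain ⟨K, hK, c, hc, h⟩ := exists_norm_twist_phase_le A hp hpos
  refine ⟨c / (2 * K), by positivity, ?_⟩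
  filter_upwards [eventually_ge_atTop K] with n hn v hv f
  have hj : ∀ (j : ℕ) (f : X → ℂ), ‖(twist A.act p (A.phase v))^[K * j] f‖ ≤
      Real.exp (-c * (j * ∑ i, v i ^ 2)) * ‖f‖ := fun j f => by
    induction j with
    | zero => simp
    | succ j ih =>
      rw [Nat.mul_succ, add_comm, Function.iterate_add_apply]
      refine (h v hv _).trans ?_
      calc _ ≤ Real.exp (-c * ∑ i, v i ^ 2) *
            (Real.exp (-c * (j * ∑ i, v i ^ 2)) * ‖f‖) := by gcongr
        _ = _ := by
          rw [← mul_assoc, ← Real.exp_add]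
          push_cast
          ring_nf
  rw [← Nat.div_add_mod n K, Function.iterate_add_apply, Nat.div_add_mod]
  refine (hj _ _).trans ?_
  have hjn : (n : ℝ) ≤ 2 * K * (n / K : ℕ) := by
    have h1 := Nat.div_add_mod n K
    have h2 := Nat.mod_lt n hK
    have h3 : 1 ≤ n / K := (Nat.one_le_div_iff hK).2 hn
    have h4 : K ≤ K * (n / K) := Nat.le_mul_of_pos_right _ h3
    have h5 : n ≤ 2 * K * (n / K) := by rw [mul_assoc]; omega
    exact_mod_cast h5
  have hs : 0 ≤ ∑ i, v i ^ 2 := Finset.sum_nonneg fun i _ => sq_nonneg _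
  have hK' : (0 : ℝ) < K := by exact_mod_cast hK
  refine mul_le_mul (Real.exp_le_exp.2 ?_) (norm_iterate_twist_le hp (A.norm_phase_le v) _ f)
    (norm_nonneg _) (Real.exp_pos _).le
  rw [neg_mul, neg_mul, neg_le_neg_iff, div_mul_eq_mul_div, div_le_iff₀ (by positivity)]
  calc c * (n * ∑ i, v i ^ 2) ≤ c * ((2 * K * (n / K : ℕ)) * ∑ i, v i ^ 2) := by gcongr
    _ = _ := by ring

end

lemma norm_exp_mul_I_sub_le (u : ℝ) :
    ‖Complex.exp (u * Complex.I) - 1 - u * Complex.I‖ ≤ 3 * u ^ 2 := by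
  have hn : ‖(u : ℂ) * Complex.I‖ = |u| := by simp
  rcases le_or_gt |u| 1 with h | h
  · have := Complex.norm_exp_sub_one_sub_id_le (x := u * Complex.I) (by rwa [hn])
    rw [hn, sq_abs] at this
    nlinarith [sq_nonneg u]
  · have h1 := norm_sub_le (Complex.exp (u * Complex.I) - 1) (u * Complex.I)
    have h2 := norm_sub_le (Complex.exp (u * Complex.I)) 1
    rw [Complex.norm_exp_ofReal_mul_I, norm_one] at h2
    rw [hn] at h1
    nlinarith [sq_abs u]

lemma tendsto_mul_exp_sub (u : ℝ) :
    Tendsto (fun n : ℕ => (n : ℂ) * (Complex.exp (((√n)⁻¹ * u : ℝ) * Complex.I) - 1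
      - ((√n)⁻¹ * u : ℝ) * Complex.I)) atTop (nhds (-(u ^ 2 / 2 : ℝ))) := by
  have hs : Tendsto (fun n : ℕ => (√n)⁻¹) atTop (nhds 0) :=
    tendsto_inv_atTop_zero.comp (Real.tendsto_sqrt_atTop.comp tendsto_natCast_atTop_atTop)
  have hz : Tendsto (fun n : ℕ => |u| ^ 3 * (√n)⁻¹) atTop (nhds 0) := by
    simpa using hs.const_mul (|u| ^ 3)
  rw [tendsto_iff_norm_sub_tendsto_zero]
  refine squeeze_zero' (Eventually.of_forall fun _ => norm_nonneg _) ?_ hz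
  have hsu : ∀ᶠ n : ℕ in atTop, |(√n)⁻¹ * u| < 1 := by
    have : Tendsto (fun n : ℕ => |(√n)⁻¹ * u|) atTop (nhds 0) := by
      simpa using (hs.mul_const u).abs
    exact this.eventually (gt_mem_nhds one_pos)
  filter_upwards [hsu, eventually_gt_atTop 0] with n hn hn0
  have hn0' : (0 : ℝ) < n := by exact_mod_cast hn0
  set t : ℝ := (√n)⁻¹ * u with ht
  have hnt : (n : ℝ) * t ^ 2 = u ^ 2 := by
    rw [ht, mul_pow, inv_pow, Real.sq_sqrt hn0'.le]
    field_simp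
  have hb := Complex.exp_bound (x := t * Complex.I) (by simpa using hn.le) (n := 3) (by norm_num)
  have hsum : ∑ m ∈ Finset.range 3, ((t : ℂ) * Complex.I) ^ m / (m.factorial : ℂ)
      = 1 + t * Complex.I - t ^ 2 / 2 := by
    simp [Finset.sum_range_succ, mul_pow, Nat.factorial]
    ring
  rw [hsum] at hb
  have heq : (n : ℂ) * (Complex.exp (t * Complex.I) - 1 - t * Complex.I) - (-(u ^ 2 / 2 : ℝ))
      = n * (Complex.exp (t * Complex.I) - (1 + t * Complex.I - t ^ 2 / 2)) := by
    rw [← hnt]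
    push_cast
    ring
  rw [heq, norm_mul, Complex.norm_natCast]
  have hnorm : ‖(t : ℂ) * Complex.I‖ = |t| := by simp
  rw [hnorm] at hb
  have h3 : (n : ℝ) * |t| ^ 3 = |u| ^ 3 * (√n)⁻¹ := by
    have h4 : |t| = (√n)⁻¹ * |u| := by rw [ht, abs_mul, abs_of_nonneg (by positivity)]
    have h5 : |t| ^ 3 = t ^ 2 * |t| := by rw [pow_succ, sq_abs]
    rw [h5, ← mul_assoc, hnt, h4, ← sq_abs u]
    ring
  calc (n : ℝ) * _ ≤ n * (|t| ^ 3 * 1) := by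
        refine mul_le_mul_of_nonneg_left (hb.trans ?_) hn0'.le
        refine mul_le_mul_of_nonneg_left ?_ (by positivity)
        norm_num [Nat.factorial]
    _ = _ := by rw [mul_one, h3]

lemma IsProb.tendsto_tsum_smul {G : Type*} {p : G → ℝ} (hp : IsProb p) {F : ℕ → G → ℂ} {f : G → ℂ}
    {B : G → ℝ} (hB : Summable fun g => p g * B g) (hFB : ∀ n g, ‖F n g‖ ≤ B g)
    (hF : ∀ g, Tendsto (fun n => F n g) atTop (nhds (f g))) :
    Tendsto (fun n => ∑' g, p g • F n g) atTop (nhds (∑' g, p g • f g)) := by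
  refine tendsto_tsum_of_dominated_convergence hB (fun g => (hF g).const_smul _)
    (Eventually.of_forall fun n g => ?_)
  rw [norm_smul, Real.norm_of_nonneg (hp.1 g)]
  exact mul_le_mul_of_nonneg_left (hFB n g) (hp.1 g)

/-- The phase `exp(i ω / √n)`. -/
noncomputable def expPhase {G X : Type*} (ω : X → G → ℝ) (n : ℕ) (x : X) (g : G) : ℂ :=
  Complex.exp (((√n)⁻¹ * ω x g : ℝ) * Complex.I)

lemma norm_expPhase_le {G X : Type*} (ω : X → G → ℝ) (n : ℕ) (x : X) (g : G) :
    ‖expPhase ω n x g‖ ≤ 1 := (Complex.norm_exp_ofReal_mul_I _).le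

lemma tendsto_expPhase {G X : Type*} (ω : X → G → ℝ) (x : X) (g : G) :
    Tendsto (fun n => expPhase ω n x g) atTop (nhds 1) := by
  have hs : Tendsto (fun n : ℕ => (√n)⁻¹ * ω x g) atTop (nhds 0) := by
    simpa using (tendsto_inv_atTop_zero.comp
      (Real.tendsto_sqrt_atTop.comp tendsto_natCast_atTop_atTop)).mul_const (ω x g)
  have : Continuous fun t : ℝ => Complex.exp (t * Complex.I) := by fun_prop
  have h := (this.tendsto 0).comp hs
  rw [Complex.ofReal_zero, zero_mul, Complex.exp_zero] at h
  exact h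

section

variable {G X : Type*} [Fintype X] {act : X → G → X} {p : G → ℝ}

lemma twist_sub (hp : IsProb p) {u : X → G → ℂ} (hu : ∀ x g, ‖u x g‖ ≤ 1) (f f' : X → ℂ) :
    twist act p u (f - f') = twist act p u f - twist act p u f' := map_sub (twistₗ act hp hu) f f'

lemma iterate_twist_sub (hp : IsProb p) {u : X → G → ℂ} (hu : ∀ x g, ‖u x g‖ ≤ 1) (n : ℕ)
    (f f' : X → ℂ) : (twist act p u)^[n] (f - f') =
      (twist act p u)^[n] f - (twist act p u)^[n] f' := by
  simp_rw [← twistₗ_pow_apply hp hu, map_sub]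

lemma iterate_twist_smul (hp : IsProb p) {u : X → G → ℂ} (hu : ∀ x g, ‖u x g‖ ≤ 1) (n : ℕ)
    (c : ℂ) (f : X → ℂ) : (twist act p u)^[n] (c • f) = c • (twist act p u)^[n] f := by
  simp_rw [← twistₗ_pow_apply hp hu, map_smul]

/-- An approximate eigenvector stays one under iteration of a contraction. -/
lemma norm_iterate_twist_sub_le (hp : IsProb p) {u : X → G → ℂ} (hu : ∀ x g, ‖u x g‖ ≤ 1)
    {a : ℂ} (ha : ‖a‖ ≤ 1) (f : X → ℂ) (n : ℕ) :
    ‖(twist act p u)^[n] f - a ^ n • f‖ ≤ n * ‖twist act p u f - a • f‖ := by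
  induction n with
  | zero => simp
  | succ n ih =>
    have : (twist act p u)^[n + 1] f - a ^ (n + 1) • f =
        (twist act p u)^[n] (twist act p u f - a • f) +
          a • ((twist act p u)^[n] f - a ^ n • f) := by
      rw [Function.iterate_succ_apply, iterate_twist_sub hp hu, iterate_twist_smul hp hu, smul_sub,
        smul_smul, pow_succ']
      abel
    rw [this]
    refine (norm_add_le _ _).trans ?_
    rw [norm_smul]
    have h1 := norm_iterate_twist_le (act := act) hp hu n (twist act p u f - a • f)
    have h2 := mul_le_of_le_one_left
      (norm_nonneg ((twist act p u)^[n] f - a ^ n • f)) ha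
    push_cast
    linarith

lemma tendsto_iterate_twist_expPhase (hp : IsProb p) (ω : X → G → ℝ) (k : ℕ) (f : X → ℂ) :
    Tendsto (fun n => (twist act p (expPhase ω n))^[k] f) atTop
      (nhds ((twist act p fun _ _ => 1)^[k] f)) := by
  have h1 : ∀ f : X → ℂ, Tendsto (fun n => twist act p (expPhase ω n) f) atTop
      (nhds (twist act p (fun _ _ => 1) f)) := fun f => by
    refine tendsto_pi_nhds.2 fun x => ?_
    exact hp.tendsto_tsum_smul (hp.2.summable.mul_right ‖f‖)
      (fun n g => norm_twist_term_le (norm_expPhase_le ω n) f x g)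
      fun g => (tendsto_expPhase ω x g).mul_const _
  induction k with
  | zero => simp
  | succ k ih =>
    simp_rw [Function.iterate_succ_apply']
    set F := (twist act p fun _ _ => 1)^[k] f
    rw [tendsto_iff_norm_sub_tendsto_zero] at ih ⊢
    have h2 := tendsto_iff_norm_sub_tendsto_zero.1 (h1 F)
    have h3 := ih.add h2
    rw [add_zero] at h3
    refine squeeze_zero (fun _ => norm_nonneg _) (fun n => ?_) h3
    have h4 := norm_twist_le (act := act) hp (norm_expPhase_le ω n)
      ((twist act p (expPhase ω n))^[k] f - F)
    rw [twist_sub hp (norm_expPhase_le ω n)] at h4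
    refine le_trans ?_ (add_le_add_left h4 _)
    exact norm_sub_le_norm_sub_add_norm_sub _ _ _

/-- Second-order expansion of the twisted operator at a perturbed constant. -/
lemma tendsto_twist_expPhase (hp : IsProb p) {ω : X → G → ℝ} {x : X}
    (hω : Summable fun g => p g * ω x g ^ 2) (h0 : ∑' g, p g * ω x g = 0) (k : X → ℂ) :
    Tendsto (fun n : ℕ => (n : ℂ) * (twist act p (expPhase ω n) (1 + (n : ℂ)⁻¹ • k) x - 1)) atTop
      (nhds (-((∑' g, p g * ω x g ^ 2) / 2 : ℝ) + twist act p (fun _ _ => 1) k x)) := by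
  have hω1 : Summable fun g => p g * ω x g := by
    refine Summable.of_norm_bounded (hp.2.summable.add hω) fun g => ?_
    rw [norm_mul, Real.norm_of_nonneg (hp.1 g), Real.norm_eq_abs, ← mul_one_add]
    refine mul_le_mul_of_nonneg_left ?_ (hp.1 g)
    nlinarith [sq_abs (ω x g), sq_nonneg (|ω x g| - 1)]
  have hlim := hp.tendsto_tsum_smul (F := fun n g => (n : ℂ) * (expPhase ω n x g - 1
      - ((√n)⁻¹ * ω x g : ℝ) * Complex.I) + expPhase ω n x g * k (act x g))
    (f := fun g => -(ω x g ^ 2 / 2 : ℝ) + 1 * k (act x g))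
    (B := fun g => 3 * ω x g ^ 2 + ‖k‖) ?_ ?_ ?_
  · have hkb : Summable fun g => p g • (1 * k (act x g)) :=
      hp.summable_smul (f := fun g => 1 * k (act x g)) fun g =>
        norm_twist_term_le (u := fun _ _ => 1) (by simp) k x g
    have hωc : HasSum (fun g => p g • (-(ω x g ^ 2 / 2 : ℝ) : ℂ))
        (-((∑' g, p g * ω x g ^ 2) / 2 : ℝ)) := by
      have := Complex.hasSum_ofReal.2 (hω.hasSum.div_const 2).neg
      push_cast at this ⊢
      refine this.congr_fun ?_
      intro g
      simp only [Complex.real_smul]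
      ring
    have heq : ∑' g, p g • ((-(ω x g ^ 2 / 2 : ℝ) : ℂ) + 1 * k (act x g)) =
        -((∑' g, p g * ω x g ^ 2) / 2 : ℝ) + twist act p (fun _ _ => 1) k x := by
      simp_rw [smul_add]
      rw [hωc.summable.tsum_add hkb, hωc.tsum_eq]
      rfl
    rw [heq] at hlim
    refine hlim.congr' ?_
    filter_upwards [eventually_gt_atTop 0] with n hn
    have hn' : (n : ℂ) ≠ 0 := by exact_mod_cast hn.ne'
    have hs1 : HasSum (fun g => p g • (expPhase ω n x g * (1 + (n : ℂ)⁻¹ • k) (act x g)))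
        (twist act p (expPhase ω n) (1 + (n : ℂ)⁻¹ • k) x) :=
      (hp.summable_smul fun g => norm_twist_term_le (norm_expPhase_le ω n)
        (1 + (n : ℂ)⁻¹ • k) x g).hasSum
    have hs2 : HasSum (fun g => (p g : ℂ)) 1 := by
      have := Complex.hasSum_ofReal.2 hp.2
      rwa [Complex.ofReal_one] at this
    have hs3 : HasSum (fun g => ((p g * ω x g : ℝ) : ℂ)) 0 := by
      have := Complex.hasSum_ofReal.2 hω1.hasSum
      rwa [h0, Complex.ofReal_zero] at this
    have hs4 := ((hs1.sub hs2).sub (hs3.mul_left (((√n)⁻¹ : ℝ) * Complex.I))).mul_left (n : ℂ)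
    rw [mul_zero, sub_zero] at hs4
    rw [← hs4.tsum_eq]
    refine tsum_congr fun g => ?_
    simp only [Complex.real_smul, Pi.add_apply, Pi.one_apply, Pi.smul_apply, smul_eq_mul]
    push_cast
    field_simp
    ring
  · refine ((hω.mul_left 3).add (hp.2.summable.mul_right ‖k‖)).congr fun g => ?_
    ring
  · intro n g
    refine (norm_add_le _ _).trans (add_le_add ?_
      (norm_twist_term_le (norm_expPhase_le ω n) k x g))
    rw [norm_mul, Complex.norm_natCast]
    refine (mul_le_mul_of_nonneg_left (norm_exp_mul_I_sub_le _) n.cast_nonneg).trans ?_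
    rw [mul_pow, inv_pow, Real.sq_sqrt n.cast_nonneg]
    rcases eq_or_ne n 0 with rfl | hn
    · simp; positivity
    · have : (n : ℝ) ≠ 0 := by exact_mod_cast hn
      field_simp
      exact le_rfl
  · intro g
    exact (tendsto_mul_exp_sub _).add ((tendsto_expPhase ω x g).mul_const _)

end

section CLT

variable {G X ι : Type*} [Group G] [Fintype X] [Nonempty X] (A : LatticeCocycle G X ι) {p : G → ℝ}

/-- Central limit theorem for the additive functional `ω`, jointly with the position in `X`. -/
lemma tendsto_iterate_twist_clt (hp : IsProb p) (hpos : EventuallyPos p) {ω : X → G → ℝ}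
    (hω : ∀ x, Summable fun g => p g * ω x g ^ 2) (h0 : ∀ x, ∑' g, p g * ω x g = 0) {Q : ℝ}
    (hQ : ∑ x, ∑' g, p g * ω x g ^ 2 = Fintype.card X * Q) (f : X → ℂ) (x : X) :
    Tendsto (fun n : ℕ => (twist A.act p (expPhase ω n))^[n] f x) atTop
      (nhds (Real.exp (-(Q / 2)) * ((Fintype.card X : ℂ)⁻¹ * ∑ y, f y))) := by
  have hc : (Fintype.card X : ℂ) ≠ 0 := by exact_mod_cast Fintype.card_ne_zero
  have hcR : (0 : ℝ) < Fintype.card X := by exact_mod_cast Fintype.card_pos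
  have hQ0 : 0 ≤ Q := by
    have : 0 ≤ Fintype.card X * Q := hQ ▸ Finset.sum_nonneg fun x _ =>
      tsum_nonneg fun g => mul_nonneg (hp.1 g) (sq_nonneg _)
    exact nonneg_of_mul_nonneg_right this hcR
  have hninv : Tendsto (fun n : ℕ => (n : ℂ)⁻¹) atTop (nhds 0) := tendsto_inv_atTop_nhds_zero_nat
  -- mean-zero functions
  have hzero : ∀ f : X → ℂ, ∑ y, f y = 0 →
      Tendsto (fun n : ℕ => (twist A.act p (expPhase ω n))^[n] f) atTop (nhds 0) := by
    intro f hf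
    rw [Metric.tendsto_nhds]
    intro ε hε
    obtain ⟨k, hk⟩ := tendsto_iterate_twist_one A hp hpos f hf hε
    have h1 := (tendsto_iterate_twist_expPhase (act := A.act) hp ω k f).norm.eventually
      (gt_mem_nhds hk)
    filter_upwards [h1, eventually_ge_atTop k] with n hn hkn
    rw [dist_zero_right, ← Nat.sub_add_cancel hkn, Function.iterate_add_apply]
    rw [Nat.sub_add_cancel hkn]
    exact (norm_iterate_twist_le hp (norm_expPhase_le ω n) _ _).trans_lt hn
  -- the constant function
  have hone : Tendsto (fun n : ℕ => (twist A.act p (expPhase ω n))^[n] 1 x) atTop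
      (nhds (Real.exp (-(Q / 2)))) := by
    obtain ⟨k, hk⟩ := exists_poisson A hp hpos
      (fun x => (((∑' g, p g * ω x g ^ 2) / 2 : ℝ) : ℂ) - (Q / 2 : ℝ)) (by
        rw [Finset.sum_sub_distrib, ← Complex.ofReal_sum, ← Finset.sum_div, hQ]
        simp
        ring)
    set φ : ℕ → X → ℂ := fun n => 1 + (n : ℂ)⁻¹ • k with hφ
    set a : ℕ → ℂ := fun n => ((1 + -(Q / 2) / n : ℝ) : ℂ) with ha
    have ha1 : ∀ᶠ n in atTop, ‖a n‖ ≤ 1 := by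
      filter_upwards [tendsto_natCast_atTop_atTop.eventually_ge_atTop (Q / 2),
        eventually_gt_atTop 0] with n hn hn0
      have hn0' : (0 : ℝ) < n := by exact_mod_cast hn0
      have h1 : Q / 2 / n ≤ 1 := (div_le_one hn0').2 hn
      have h2 : 0 ≤ Q / 2 / n := by positivity
      simp only [ha]
      rw [Complex.norm_real, Real.norm_eq_abs, abs_le, neg_div]
      constructor <;> linarith
    have han : Tendsto (fun n => a n ^ n) atTop (nhds (Real.exp (-(Q / 2)))) := by
      have := (Complex.continuous_ofReal.tendsto _).comp
        (Real.tendsto_one_add_div_pow_exp (-(Q / 2)))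
      refine this.congr fun n => ?_
      simp [ha]
    have hφ1 : Tendsto φ atTop (nhds 1) := by
      have : Tendsto (fun n : ℕ => (1 : X → ℂ) + (n : ℂ)⁻¹ • k) atTop (nhds (1 + (0 : ℂ) • k)) :=
        tendsto_const_nhds.add (hninv.smul_const k)
      simpa using this
    have herr : Tendsto (fun n : ℕ => (n : ℂ) • (twist A.act p (expPhase ω n) (φ n) - a n • φ n))
        atTop (nhds 0) := by
      refine tendsto_pi_nhds.2 fun y => ?_
      have h1 := tendsto_twist_expPhase (act := A.act) hp (hω y) (h0 y) k
      have h2 : Tendsto (fun n : ℕ => -(Q / 2 : ℝ) + k y + (n : ℂ)⁻¹ * (-(Q / 2 : ℝ) * k y)) atTop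
          (nhds (-(Q / 2 : ℝ) + k y + 0 * (-(Q / 2 : ℝ) * k y))) :=
        tendsto_const_nhds.add (hninv.mul_const _)
      have h3 := h1.sub h2
      have h4 : (-((∑' g, p g * ω y g ^ 2) / 2 : ℝ) + twist A.act p (fun _ _ => 1) k y
          - (-(Q / 2 : ℝ) + k y + 0 * (-(Q / 2 : ℝ) * k y)) : ℂ) = (0 : X → ℂ) y := by
        have := hk y
        rw [Pi.zero_apply]
        linear_combination this
      rw [h4] at h3
      refine h3.congr' ?_
      filter_upwards [eventually_gt_atTop 0] with n hn
      have hn' : (n : ℂ) ≠ 0 := by exact_mod_cast hn.ne'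
      simp only [hφ, ha, Pi.smul_apply, Pi.sub_apply, Pi.add_apply, Pi.one_apply, smul_eq_mul]
      push_cast
      field_simp
      ring
    have h5 : Tendsto (fun n => (twist A.act p (expPhase ω n))^[n] (φ n) - a n ^ n • φ n) atTop
        (nhds 0) := by
      refine squeeze_zero_norm' ?_ (tendsto_zero_iff_norm_tendsto_zero.1 herr)
      filter_upwards [ha1] with n hn
      refine (norm_iterate_twist_sub_le hp (norm_expPhase_le ω n) hn (φ n) n).trans_eq ?_
      rw [norm_smul, Complex.norm_natCast]
    have h6 : Tendsto (fun n => (twist A.act p (expPhase ω n))^[n] (1 - φ n)) atTop (nhds 0) := by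
      have h7 : Tendsto (fun n => 1 - φ n) atTop (nhds 0) := by
        simpa using hφ1.const_sub 1
      exact squeeze_zero_norm (fun n => norm_iterate_twist_le hp (norm_expPhase_le ω n) n _)
        (tendsto_zero_iff_norm_tendsto_zero.1 h7)
    have h8 := (h6.add h5).add (han.smul hφ1)
    have h9 := (tendsto_pi_nhds.1 h8) x
    simp only [zero_add, Pi.smul_apply, Pi.one_apply, smul_eq_mul, mul_one] at h9
    refine h9.congr fun n => ?_
    rw [iterate_twist_sub hp (norm_expPhase_le ω n)]
    simp
  set m : ℂ := (Fintype.card X : ℂ)⁻¹ * ∑ y, f y with hm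
  have h1 := ((tendsto_pi_nhds.1 (hzero (f - m • 1) (by
    simp [hm, Finset.sum_sub_distrib]))) x).add (hone.const_mul m)
  rw [Pi.zero_apply, zero_add, mul_comm m] at h1
  refine h1.congr fun n => ?_
  rw [iterate_twist_sub hp (norm_expPhase_le ω n), iterate_twist_smul hp (norm_expPhase_le ω n)]
  simp

end CLT

section Compare

variable {G X ι : Type*} [Group G] [Fintype ι]

/-- The additive functional `⟨v, α⟩`, centred by the drift and corrected by a coboundary. -/
def LatticeCocycle.corrected (A : LatticeCocycle G X ι) (ζ v : ι → ℝ) (h : X → ℝ) (x : X) (g : G) :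
    ℝ :=
  ∑ i, v i * A.val x g i - ∑ i, v i * ζ i + (h (A.act x g) - h x)

/-- `x ↦ exp(i t h(x))`. -/
noncomputable def expFun (h : X → ℝ) (t : ℝ) (x : X) : ℂ := Complex.exp ((t * h x : ℝ) * Complex.I)

lemma norm_expFun (h : X → ℝ) (t : ℝ) (x : X) : ‖expFun h t x‖ = 1 :=
  Complex.norm_exp_ofReal_mul_I _

lemma tendsto_expFun_mul (h : X → ℝ) (f : X → ℂ) {t : ℕ → ℝ} (ht : Tendsto t atTop (nhds 0)) :
    Tendsto (fun n => expFun h (t n) * f) atTop (nhds f) := by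
  refine tendsto_pi_nhds.2 fun x => ?_
  have hc : Continuous fun s : ℝ => Complex.exp ((s * h x : ℝ) * Complex.I) * f x := by fun_prop
  have := (hc.tendsto 0).comp ht
  rw [zero_mul, Complex.ofReal_zero, zero_mul, Complex.exp_zero, one_mul] at this
  exact this

variable (A : LatticeCocycle G X ι) {p p' : G → ℝ}

lemma twist_phase_eq (p : G → ℝ) (ζ v : ι → ℝ) (h : X → ℝ) (n : ℕ) (f : X → ℂ) :
    twist A.act p (A.phase ((√n)⁻¹ • v)) f = Complex.exp (((√n)⁻¹ * ∑ i, v i * ζ i : ℝ) * Complex.I) •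
      (expFun h (√n)⁻¹ * twist A.act p (expPhase (A.corrected ζ v h) n)
        (expFun h (-(√n)⁻¹) * f)) := by
  funext x
  simp only [twist, Pi.smul_apply, Pi.mul_apply, smul_eq_mul]
  rw [← tsum_mul_left, ← tsum_mul_left]
  refine tsum_congr fun g => ?_
  simp only [Complex.real_smul]
  have : A.phase ((√n)⁻¹ • v) x g = Complex.exp (((√n)⁻¹ * ∑ i, v i * ζ i : ℝ) * Complex.I) *
      (expFun h (√n)⁻¹ x * (expPhase (A.corrected ζ v h) n x g *
        expFun h (-(√n)⁻¹) (A.act x g))) := by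
    simp only [LatticeCocycle.phase, chr, expFun, expPhase, ← Complex.exp_add, ← add_mul,
      ← Complex.ofReal_add, LatticeCocycle.corrected, Pi.smul_apply, smul_eq_mul, mul_assoc,
      ← Finset.mul_sum]
    ring_nf
  rw [this]
  ring

variable [Fintype X]

lemma iterate_twist_phase_eq (hp : IsProb p) (ζ v : ι → ℝ) (h : X → ℝ) (n k : ℕ) (f : X → ℂ) :
    (twist A.act p (A.phase ((√n)⁻¹ • v)))^[k] f =
      Complex.exp (((√n)⁻¹ * ∑ i, v i * ζ i : ℝ) * Complex.I) ^ k •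
      (expFun h (√n)⁻¹ * (twist A.act p (expPhase (A.corrected ζ v h) n))^[k]
        (expFun h (-(√n)⁻¹) * f)) := by
  induction k generalizing f with
  | zero =>
    funext x
    simp only [Function.iterate_zero, id, pow_zero, one_smul, Pi.mul_apply, expFun, ← mul_assoc,
      ← Complex.exp_add]
    simp
  | succ k ih =>
    rw [Function.iterate_succ_apply, ih, twist_phase_eq A p ζ v h, Function.iterate_succ_apply,
      pow_succ, mul_smul]
    have hE : ∀ f : X → ℂ, expFun h (-(√n)⁻¹) * (expFun h (√n)⁻¹ * f) = f := fun f => by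
      funext x
      simp only [Pi.mul_apply, expFun, ← mul_assoc, ← Complex.exp_add]
      simp
    rw [mul_smul_comm, hE]
    rw [iterate_twist_smul hp (norm_expPhase_le _ n), mul_smul_comm]

variable [Nonempty X]

/-- The hypotheses of the central limit theorem for the corrected functional, with variance `Q`. -/
structure IsCentred (ω : X → G → ℝ) (p : G → ℝ) (Q : ℝ) : Prop where
  summable : ∀ x, Summable fun g => p g * ω x g ^ 2
  mean : ∀ x, ∑' g, p g * ω x g = 0
  variance : ∑ x, ∑' g, p g * ω x g ^ 2 = Fintype.card X * Q

lemma tendsto_iterate_twist_phase_sub (hp : IsProb p) (hpos : EventuallyPos p) (hp' : IsProb p')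
    (hpos' : EventuallyPos p') {ζ v : ι → ℝ} {h : X → ℝ} {Q : ℝ}
    (hc : IsCentred (A.corrected ζ v h) p Q) (hc' : IsCentred (A.corrected ζ v h) p' Q)
    (f : X → ℂ) (x : X) :
    Tendsto (fun n : ℕ => (twist A.act p (A.phase ((√n)⁻¹ • v)))^[n] f x -
      (twist A.act p' (A.phase ((√n)⁻¹ • v)))^[n] f x) atTop (nhds 0) := by
  have hs : Tendsto (fun n : ℕ => -(√n)⁻¹) atTop (nhds 0) := by
    simpa using (tendsto_inv_atTop_zero.comp
      (Real.tendsto_sqrt_atTop.comp tendsto_natCast_atTop_atTop)).neg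
  have hf := (tendsto_expFun_mul h f hs).sub_const f
  rw [sub_self] at hf
  have key : ∀ {p : G → ℝ}, IsProb p → EventuallyPos p → IsCentred (A.corrected ζ v h) p Q →
      Tendsto (fun n : ℕ => (twist A.act p (expPhase (A.corrected ζ v h) n))^[n]
        (expFun h (-(√n)⁻¹) * f) x) atTop
        (nhds (Real.exp (-(Q / 2)) * ((Fintype.card X : ℂ)⁻¹ * ∑ y, f y))) := by
    intro p hp hpos hc
    have h1 := tendsto_iterate_twist_clt A hp hpos hc.summable hc.mean hc.variance f x
    have h2 : Tendsto (fun n : ℕ => (twist A.act p (expPhase (A.corrected ζ v h) n))^[n]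
        (expFun h (-(√n)⁻¹) * f - f) x) atTop (nhds 0) :=
      squeeze_zero_norm (fun n => (norm_le_pi_norm _ x).trans
        (norm_iterate_twist_le hp (norm_expPhase_le _ n) n _)) (tendsto_zero_iff_norm_tendsto_zero.1 hf)
    have h3 := h2.add h1
    rw [zero_add] at h3
    refine h3.congr fun n => ?_
    rw [iterate_twist_sub hp (norm_expPhase_le _ n)]
    simp
  have h4 := (key hp hpos hc).sub (key hp' hpos' hc')
  rw [sub_self] at h4
  refine squeeze_zero_norm (fun n => ?_) (tendsto_zero_iff_norm_tendsto_zero.1 h4)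
  rw [iterate_twist_phase_eq A hp ζ v h, iterate_twist_phase_eq A hp' ζ v h]
  simp only [Pi.smul_apply, Pi.mul_apply, smul_eq_mul, ← mul_sub]
  rw [norm_mul, norm_mul, norm_pow, Complex.norm_exp_ofReal_mul_I, one_pow, one_mul, norm_expFun,
    one_mul]

end Compare

section Fourier

variable {ι : Type*} [Fintype ι]

/-- Lebesgue measure on the cube `(-π, π]^ι`. -/
noncomputable def cubeMeasure (ι : Type*) [Fintype ι] : Measure (ι → ℝ) :=
  Measure.pi fun _ => volume.restrict (Set.Ioc (-Real.pi) Real.pi)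

instance : IsFiniteMeasure (cubeMeasure ι) := by
  unfold cubeMeasure
  infer_instance

lemma cubeMeasure_eq : cubeMeasure ι =
    volume.restrict (Set.univ.pi fun _ => Set.Ioc (-Real.pi) Real.pi) := by
  rw [cubeMeasure, ← Measure.restrict_pi_pi, volume_pi]

lemma integral_exp_int_mul (k : ℤ) :
    ∫ θ in Set.Ioc (-Real.pi) Real.pi, Complex.exp ((θ * k : ℝ) * Complex.I) =
      if k = 0 then (2 * Real.pi : ℂ) else 0 := by
  rw [← intervalIntegral.integral_of_le (by linarith [Real.pi_pos])]
  split_ifs with hk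
  · simp [hk]
    ring
  · have hc : (k : ℂ) * Complex.I ≠ 0 := by simp [hk]
    have := integral_exp_mul_complex (a := -Real.pi) (b := Real.pi) hc
    have h2 : ∀ θ : ℝ, Complex.exp ((θ * k : ℝ) * Complex.I) =
        Complex.exp (k * Complex.I * θ) := fun θ => by
      push_cast
      ring_nf
    simp_rw [h2]
    rw [this, div_eq_zero_iff, sub_eq_zero]
    left
    rw [Complex.exp_eq_exp_iff_exists_int]
    exact ⟨k, by push_cast; ring⟩

lemma integral_chr (k : ι → ℤ) :
    ∫ v, chr v k ∂cubeMeasure ι = if k = 0 then (2 * Real.pi : ℂ) ^ Fintype.card ι else 0 := by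
  have h1 : ∀ v : ι → ℝ, chr v k = ∏ i, Complex.exp ((v i * k i : ℝ) * Complex.I) := fun v => by
    rw [chr, ← Complex.exp_sum, ← Finset.sum_mul, Complex.ofReal_sum]
  simp_rw [h1, cubeMeasure]
  rw [integral_fintype_prod_eq_prod (𝕜 := ℂ)
    (f := fun i θ => Complex.exp ((θ * k i : ℝ) * Complex.I))]
  simp_rw [integral_exp_int_mul]
  split_ifs with hk
  · simp [hk, Finset.card_univ]
  · obtain ⟨i, hi⟩ := Function.ne_iff.1 hk
    exact Finset.prod_eq_zero (Finset.mem_univ i) (if_neg hi)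

lemma norm_single_one_le {X : Type*} [Fintype X] (y : X) : ‖(Pi.single y 1 : X → ℂ)‖ ≤ 1 :=
  (pi_norm_le_iff_of_nonneg zero_le_one).2 fun z => by
    rw [Pi.single_apply]
    split_ifs <;> simp

variable {G X : Type*} [Group G] [Countable G] [Fintype X] (A : LatticeCocycle G X ι)
  {p p' : G → ℝ}

omit [Countable G] in
lemma continuous_twist_phase (hp : IsProb p) (f : X → ℂ) (x : X) :
    Continuous fun v => twist A.act p (A.phase v) f x := by
  refine continuous_tsum (u := fun g => p g * ‖f‖) (fun g => ?_) (hp.2.summable.mul_right _)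
    fun g v => ?_
  · exact ((continuous_chr (A.val x g)).mul_const (f (A.act x g))).const_smul (p g)
  · rw [norm_smul, Real.norm_of_nonneg (hp.1 g)]
    exact mul_le_mul_of_nonneg_left (norm_twist_term_le (A.norm_phase_le v) f x g) (hp.1 g)

/-- Fourier inversion. -/
lemma integral_twist_phase (hp : IsProb p) (x : X) (g : G) :
    ∫ v, twist A.act p (A.phase v) (Pi.single (A.act x g) 1) x * chr v (-A.val x g)
      ∂cubeMeasure ι = (2 * Real.pi : ℂ) ^ Fintype.card ι * p g := by
  set F : G → (ι → ℝ) → ℂ := fun k v =>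
    p k • (A.phase v x k * (Pi.single (A.act x g) 1 : X → ℂ) (A.act x k)) * chr v (-A.val x g)
    with hF
  have hFn : ∀ k v, ‖F k v‖ ≤ p k := fun k v => by
    simp only [hF]
    rw [norm_mul, norm_chr, mul_one, norm_smul, Real.norm_of_nonneg (hp.1 k)]
    exact mul_le_of_le_one_right (hp.1 k) ((norm_twist_term_le (A.norm_phase_le v) _ x k).trans
      (norm_single_one_le _))
  have hFc : ∀ k, Continuous (F k) := fun k =>
    (((continuous_chr (A.val x k)).mul_const _).const_smul (p k)).mul
      (continuous_chr (-A.val x g))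
  have hFi : ∀ k, Integrable (F k) (cubeMeasure ι) := fun k =>
    (integrable_const (p k)).mono' (hFc k).aestronglyMeasurable (ae_of_all _ (hFn k))
  have hFs : Summable fun k => ∫ v, ‖F k v‖ ∂cubeMeasure ι := by
    refine Summable.of_nonneg_of_le (fun k => integral_nonneg fun v => norm_nonneg _) (fun k => ?_)
      (hp.2.summable.mul_left ((cubeMeasure ι).real Set.univ))
    refine (integral_mono (hFi k).norm (integrable_const (p k)) (hFn k)).trans_eq ?_
    rw [integral_const, smul_eq_mul]
  have h1 : ∀ v, twist A.act p (A.phase v) (Pi.single (A.act x g) 1) x * chr v (-A.val x g) =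
      ∑' k, F k v := fun v => by
    simp only [twist, hF, tsum_mul_right]
  simp_rw [h1]
  rw [← integral_tsum_of_summable_integral_norm hFi hFs, tsum_eq_single g]
  · simp only [hF, LatticeCocycle.phase, Pi.single_eq_same, one_mul, Complex.real_smul, mul_assoc,
      ← chr_add]
    rw [integral_const_mul, integral_chr, if_pos (add_neg_cancel _), mul_comm]
  · intro k hk
    by_cases ha : A.act x k = A.act x g
    · have hv : A.val x k ≠ A.val x g := fun hv => hk ((A.bij x).1 (Prod.ext ha hv))
      simp only [hF, LatticeCocycle.phase, ha, Pi.single_eq_same, Complex.real_smul,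
        mul_assoc, one_mul, ← chr_add]
      rw [integral_const_mul, integral_chr, if_neg, mul_zero]
      rwa [← sub_eq_add_neg, sub_eq_zero]
    · simp [hF, Pi.single_eq_of_ne ha]

omit [Countable G] in
lemma twist_phase_sub_continuous (hp : IsProb p) (hp' : IsProb p') (n : ℕ) (f : X → ℂ) (x : X) :
    Continuous fun v => (twist A.act p (A.phase v))^[n] f x -
      (twist A.act p' (A.phase v))^[n] f x := by
  simp_rw [← twist_phase_convPow A hp, ← twist_phase_convPow A hp']
  exact (continuous_twist_phase A (isProb_convPow hp n) f x).sub
    (continuous_twist_phase A (isProb_convPow hp' n) f x)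

lemma abs_convPow_sub_le (hp : IsProb p) (hp' : IsProb p') (n : ℕ) (x : X) (g : G) :
    |convPow p n g - convPow p' n g| ≤ ∫ v, ‖(twist A.act p (A.phase v))^[n] (Pi.single (A.act x g) 1) x -
      (twist A.act p' (A.phase v))^[n] (Pi.single (A.act x g) 1) x‖ ∂cubeMeasure ι := by
  have hi : ∀ {q : G → ℝ}, IsProb q → Integrable (fun v => twist A.act q (A.phase v)
      (Pi.single (A.act x g) 1) x * chr v (-A.val x g)) (cubeMeasure ι) := fun {q} hq =>
    (integrable_const (1 : ℝ)).mono'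
      ((continuous_twist_phase A hq _ x).mul (continuous_chr _)).aestronglyMeasurable
      (ae_of_all _ fun v => by
        rw [norm_mul, norm_chr, mul_one]
        exact (norm_le_pi_norm _ x).trans ((norm_twist_le hq (A.norm_phase_le v) _).trans
          (norm_single_one_le _)))
  have h1 := integral_sub (hi (isProb_convPow hp n)) (hi (isProb_convPow hp' n))
  rw [integral_twist_phase A (isProb_convPow hp n), integral_twist_phase A (isProb_convPow hp' n),
    ← mul_sub] at h1
  simp only [← sub_mul] at h1
  have h2 := norm_integral_le_integral_norm (μ := cubeMeasure ι)
    (fun v => (twist A.act (convPow p n) (A.phase v) (Pi.single (A.act x g) 1) x -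
      twist A.act (convPow p' n) (A.phase v) (Pi.single (A.act x g) 1) x) * chr v (-A.val x g))
  rw [h1] at h2
  simp_rw [norm_mul, norm_chr, mul_one, twist_phase_convPow A hp, twist_phase_convPow A hp'] at h2
  refine le_trans ?_ h2
  rw [← Complex.ofReal_sub, Complex.norm_real, Real.norm_eq_abs]
  refine le_mul_of_one_le_left (abs_nonneg _) ?_
  rw [norm_pow]
  refine one_le_pow₀ ?_
  rw [norm_mul, Complex.norm_real, Real.norm_of_nonneg Real.pi_pos.le, Complex.norm_ofNat]
  linarith [Real.pi_gt_three]

end Fourier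

section LocalLimit

variable {G X ι : Type*} [Group G] [Countable G] [Fintype X] [Fintype ι]
  (A : LatticeCocycle G X ι) {p p' : G → ℝ}

lemma integrable_exp_neg_mul_sum_sq {c : ℝ} (hc : 0 < c) :
    Integrable (fun w : ι → ℝ => Real.exp (-c * ∑ i, w i ^ 2)) := by
  have h : ∀ w : ι → ℝ, Real.exp (-c * ∑ i, w i ^ 2) = ∏ i, Real.exp (-c * w i ^ 2) := fun w => by
    rw [← Real.exp_sum, Finset.mul_sum]
  simp_rw [h]
  exact Integrable.fintype_prod (f := fun _ t => Real.exp (-c * t ^ 2))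
    fun _ => integrable_exp_neg_mul_sq hc

/-- Rescaling of an integral over the cube. -/
lemma mul_integral_cube_eq {n : ℕ} (hn : 0 < n) (F : (ι → ℝ) → ℝ) :
    √n ^ Fintype.card ι * ∫ v, F v ∂cubeMeasure ι =
      ∫ w, (Set.univ.pi fun _ => Set.Ioc (-Real.pi) Real.pi).indicator F ((√n)⁻¹ • w) := by
  have hs : 0 < √(n : ℝ) := Real.sqrt_pos.2 (by exact_mod_cast hn)
  rw [Measure.integral_comp_smul, Module.finrank_fintype_fun_eq_card, inv_pow, inv_inv,
    abs_of_pos (by positivity), integral_indicator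
      (MeasurableSet.univ_pi fun _ => measurableSet_Ioc), cubeMeasure_eq, smul_eq_mul]

omit [Countable G] in
lemma tendsto_mul_integral_cube [Nonempty X] (hp : IsProb p) (hpos : EventuallyPos p)
    (hp' : IsProb p') (hpos' : EventuallyPos p') {ζ : ι → ℝ}
    (hc : ∀ v : ι → ℝ, ∃ (h : X → ℝ) (Q : ℝ), IsCentred (A.corrected ζ v h) p Q ∧
      IsCentred (A.corrected ζ v h) p' Q) (x y : X) :
    Tendsto (fun n : ℕ => √n ^ Fintype.card ι * ∫ v, ‖(twist A.act p (A.phase v))^[n] (Pi.single y 1) x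
      - (twist A.act p' (A.phase v))^[n] (Pi.single y 1) x‖ ∂cubeMeasure ι) atTop (nhds 0) := by
  set D : ℕ → (ι → ℝ) → ℝ := fun n v => ‖(twist A.act p (A.phase v))^[n] (Pi.single y 1) x
      - (twist A.act p' (A.phase v))^[n] (Pi.single y 1) x‖ with hD
  have hDc : ∀ n, Continuous (D n) := fun n =>
    (twist_phase_sub_continuous A hp hp' n (Pi.single y 1) x).norm
  set S : Set (ι → ℝ) := Set.univ.pi fun _ => Set.Ioc (-Real.pi) Real.pi with hS
  have hSm : MeasurableSet S := MeasurableSet.univ_pi fun _ => measurableSet_Ioc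
  obtain ⟨c, hc0, hb⟩ := exists_norm_iterate_twist_phase_le A hp hpos
  obtain ⟨c', hc0', hb'⟩ := exists_norm_iterate_twist_phase_le A hp' hpos'
  have hlim : Tendsto (fun n : ℕ => ∫ w, S.indicator (D n) ((√n)⁻¹ • w)) atTop
      (nhds (∫ _ : ι → ℝ, (0 : ℝ))) := by
    refine tendsto_integral_filter_of_dominated_convergence
      (fun w => Real.exp (-c * ∑ i, w i ^ 2) + Real.exp (-c' * ∑ i, w i ^ 2))
      (Eventually.of_forall fun n => ?_) ?_
      ((integrable_exp_neg_mul_sum_sq hc0).add (integrable_exp_neg_mul_sum_sq hc0'))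
      (ae_of_all _ fun w => ?_)
    · exact (((hDc n).measurable.indicator hSm).comp
        (measurable_const_smul (√n)⁻¹)).aestronglyMeasurable
    · filter_upwards [hb, hb', eventually_gt_atTop 0] with n hn hn' hn0
      refine ae_of_all _ fun w => ?_
      by_cases hw : (√n)⁻¹ • w ∈ S
      · rw [Set.indicator_of_mem hw, Real.norm_of_nonneg (norm_nonneg _)]
        have hw' : ∀ i, |((√n)⁻¹ • w) i| ≤ Real.pi := fun i =>
          abs_le.2 ⟨(hw i trivial).1.le, (hw i trivial).2⟩
        have hsq : ∀ c : ℝ, -c * (n * ∑ i, ((√n)⁻¹ • w) i ^ 2) = -c * ∑ i, w i ^ 2 := fun c => by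
          have hn0' : (0 : ℝ) < n := by exact_mod_cast hn0
          simp only [Pi.smul_apply, smul_eq_mul, mul_pow, inv_pow, Real.sq_sqrt hn0'.le,
            ← Finset.mul_sum]
          field_simp
        refine (norm_sub_le _ _).trans (add_le_add ?_ ?_)
        · refine (norm_le_pi_norm _ x).trans ((hn _ hw' _).trans ?_)
          rw [hsq]
          exact mul_le_of_le_one_right (Real.exp_pos _).le (norm_single_one_le y)
        · refine (norm_le_pi_norm _ x).trans ((hn' _ hw' _).trans ?_)
          rw [hsq]
          exact mul_le_of_le_one_right (Real.exp_pos _).le (norm_single_one_le y)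
      · rw [Set.indicator_of_notMem hw, norm_zero]
        positivity
    · obtain ⟨h, Q, h1, h2⟩ := hc w
      have := (tendsto_iterate_twist_phase_sub A hp hpos hp' hpos' h1 h2 (Pi.single y 1) x).norm
      rw [norm_zero] at this
      refine squeeze_zero (fun n => Set.indicator_nonneg (fun _ _ => norm_nonneg _) _)
        (fun n => ?_) this
      exact Set.indicator_le_self' (fun _ _ => norm_nonneg _) _
  rw [integral_zero] at hlim
  refine hlim.congr' ?_
  filter_upwards [eventually_gt_atTop 0] with n hn
  rw [← mul_integral_cube_eq hn]

/-- Two walks with the same drift and limiting covariance agree locally up to `o(n^{-m/2})`. -/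
lemma exists_uniform_local_bound [Nonempty X] (hp : IsProb p) (hpos : EventuallyPos p)
    (hp' : IsProb p') (hpos' : EventuallyPos p') {ζ : ι → ℝ}
    (hc : ∀ v : ι → ℝ, ∃ (h : X → ℝ) (Q : ℝ), IsCentred (A.corrected ζ v h) p Q ∧
      IsCentred (A.corrected ζ v h) p' Q) :
    ∃ δ : ℕ → ℝ, Tendsto δ atTop (nhds 0) ∧ ∀ (n : ℕ) g,
      √n ^ Fintype.card ι * |convPow p n g - convPow p' n g| ≤ δ n := by
  let x : X := Classical.arbitrary X
  refine ⟨_, by simpa using tendsto_finsetSum Finset.univ fun y _ =>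
    tendsto_mul_integral_cube A hp hpos hp' hpos' hc x y, fun n g => ?_⟩
  refine le_trans ?_ (Finset.single_le_sum (fun y _ => ?_) (Finset.mem_univ (A.act x g)))
  · exact mul_le_mul_of_nonneg_left (abs_convPow_sub_le A hp hp' n x g) (by positivity)
  · exact mul_nonneg (by positivity) (integral_nonneg fun _ => norm_nonneg _)

end LocalLimit

section Tightness

variable {G X : Type*} [Group G] [Fintype X] {act : X → G → X} {q : G → ℝ}

/-- Variance of a centred additive functional grows at most linearly. -/
lemma tsum_convPow_sq_le (hq : IsProb q) {c : X → G → ℝ}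
    (h1 : ∀ x, c x 1 = 0) (hc : ∀ x g h, c x (g * h) = c x g + c (act x g) h) {ζ C : ℝ}
    (hs : ∀ x, Summable fun g => q g * (c x g - ζ) ^ 2)
    (h0 : ∀ x, ∑' g, q g * (c x g - ζ) = 0) (hC : ∀ x, ∑' g, q g * (c x g - ζ) ^ 2 ≤ C)
    (n : ℕ) (x : X) :
    (Summable fun g => convPow q n g * (c x g - n * ζ) ^ 2) ∧
      ∑' g, convPow q n g * (c x g - n * ζ) ^ 2 ≤ n * C := by
  induction n with
  | zero =>
    have h : ∀ g, convPow q 0 g * (c x g - (0 : ℕ) * ζ) ^ 2 = 0 := fun g => by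
      by_cases hg : g = 1
      · subst hg
        simp [h1]
      · simp [convPow, hg]
    simp_rw [h]
    simp [summable_zero]
  | succ n ih =>
    have hn := isProb_convPow hq n
    have hs1 : ∀ y, Summable fun g => q g * (c y g - ζ) := fun y => by
      refine Summable.of_norm_bounded ((hq.2.summable).add (hs y)) fun g => ?_
      rw [norm_mul, Real.norm_of_nonneg (hq.1 g), ← mul_one_add]
      refine mul_le_mul_of_nonneg_left ?_ (hq.1 g)
      rw [Real.norm_eq_abs, ← sq_abs]
      nlinarith [sq_nonneg (|c y g - ζ| - 1)]
    have hsplit : ∀ g h, c x (g * h) - (n + 1 : ℕ) * ζ =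
        (c x g - n * ζ) + (c (act x g) h - ζ) := fun g h => by
      rw [hc]
      push_cast
      ring
    have hsum : Summable fun z : G × G =>
        (convPow q n z.1 * q z.2) • (c x (z.1 * z.2) - (n + 1 : ℕ) * ζ) ^ 2 := by
      have hb1 : Summable fun z : G × G => (convPow q n z.1 * (c x z.1 - n * ζ) ^ 2) * q z.2 :=
        ih.1.mul_of_nonneg hq.2.summable
          (fun g => mul_nonneg (hn.1 g) (sq_nonneg _)) hq.1
      have hb2 : Summable fun z : G × G => convPow q n z.1 * ∑ y, q z.2 * (c y z.2 - ζ) ^ 2 :=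
        hn.2.summable.mul_of_nonneg (summable_sum fun y _ => hs y) hn.1
          fun g => Finset.sum_nonneg fun y _ => mul_nonneg (hq.1 g) (sq_nonneg _)
      refine Summable.of_nonneg_of_le
        (fun z => mul_nonneg (mul_nonneg (hn.1 _) (hq.1 _)) (sq_nonneg _)) (fun z => ?_)
        ((hb1.add hb2).mul_left 2)
      rw [smul_eq_mul, hsplit]
      have h2 : q z.2 * (c (act x z.1) z.2 - ζ) ^ 2 ≤ ∑ y, q z.2 * (c y z.2 - ζ) ^ 2 :=
        Finset.single_le_sum (f := fun y => q z.2 * (c y z.2 - ζ) ^ 2)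
          (fun y _ => mul_nonneg (hq.1 _) (sq_nonneg _)) (Finset.mem_univ _)
      have h3 := mul_le_mul_of_nonneg_left h2 (hn.1 z.1)
      have h4 : convPow q n z.1 * q z.2 * (c x z.1 - n * ζ + (c (act x z.1) z.2 - ζ)) ^ 2 ≤
          convPow q n z.1 * q z.2 * (2 * ((c x z.1 - n * ζ) ^ 2 + (c (act x z.1) z.2 - ζ) ^ 2)) :=
        mul_le_mul_of_nonneg_left (add_sq_le) (mul_nonneg (hn.1 _) (hq.1 _))
      nlinarith
    have hin : ∀ g, ∑' h, q h • (c x (g * h) - (n + 1 : ℕ) * ζ) ^ 2 ≤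
        (c x g - n * ζ) ^ 2 + C := fun g => by
      have e : ∀ h, q h • (c x (g * h) - (n + 1 : ℕ) * ζ) ^ 2 = q h * (c x g - n * ζ) ^ 2 +
          2 * (c x g - n * ζ) * (q h * (c (act x g) h - ζ)) +
            q h * (c (act x g) h - ζ) ^ 2 := fun h => by
        rw [hsplit, smul_eq_mul]
        ring
      simp_rw [e]
      rw [((hq.2.summable.mul_right _).add ((hs1 _).mul_left _)).tsum_add (hs _),
        (hq.2.summable.mul_right _).tsum_add ((hs1 _).mul_left _), tsum_mul_left, tsum_mul_right,
        hq.2.tsum_eq, h0, mul_zero, add_zero, one_mul]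
      exact add_le_add_right (hC _) _
    have hin0 : ∀ g, 0 ≤ ∑' h, q h • (c x (g * h) - (n + 1 : ℕ) * ζ) ^ 2 := fun g =>
      tsum_nonneg fun h => mul_nonneg (hq.1 h) (sq_nonneg _)
    have hbd : ∀ g, convPow q n g • ∑' h, q h • (c x (g * h) - (n + 1 : ℕ) * ζ) ^ 2 ≤
        convPow q n g * (c x g - n * ζ) ^ 2 + convPow q n g * C := fun g => by
      rw [smul_eq_mul, ← mul_add]
      exact mul_le_mul_of_nonneg_left (hin g) (hn.1 g)
    have hbs := ih.1.add (hn.2.summable.mul_right C)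
    refine ⟨summable_conv_smul (f := fun g => (c x g - (n + 1 : ℕ) * ζ) ^ 2) hn hq hsum, ?_⟩
    have := tsum_conv_smul (f := fun g => (c x g - (n + 1 : ℕ) * ζ) ^ 2) hn hq hsum
    refine (this.le.trans ((Summable.tsum_le_tsum hbd
      (Summable.of_nonneg_of_le (fun g => mul_nonneg (hn.1 g) (hin0 g)) hbd hbs) hbs))).trans ?_
    rw [ih.1.tsum_add (hn.2.summable.mul_right C), tsum_mul_right, hn.2.tsum_eq]
    push_cast
    linarith [ih.2]

end Tightness

/-- Total variation bound from a uniform bound on a finite set and a moment bound off it. -/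
lemma tsum_abs_sub_le {G : Type*} {p p' W : G → ℝ} (hp : IsProb p) (hp' : IsProb p')
    (hW : ∀ g, 0 ≤ W g) {r s : ℝ} (hr : 0 < r) (S : Finset G) (hS : ∀ g ∉ S, r ≤ W g)
    (hs : ∀ g, |p g - p' g| ≤ s) (h1 : Summable fun g => p g * W g)
    (h2 : Summable fun g => p' g * W g) :
    ∑' g, |p g - p' g| ≤ S.card * s + r⁻¹ * (∑' g, p g * W g + ∑' g, p' g * W g) := by
  have hf : HasSum (fun g => if g ∈ S then s else 0) (S.card * s) := by
    have : HasSum (fun g => if g ∈ S then s else 0) (∑ g ∈ S, if g ∈ S then s else 0) :=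
      hasSum_sum_of_ne_finset_zero fun g hg => by simp [hg]
    simpa using this
  have hg := hf.add ((h1.hasSum.add h2.hasSum).mul_left r⁻¹)
  refine (Summable.tsum_le_tsum (fun g => ?_) (hp.2.summable.sub hp'.2.summable).abs
    hg.summable).trans_eq hg.tsum_eq
  have hpp := add_nonneg (hp.1 g) (hp'.1 g)
  have h0 : 0 ≤ r⁻¹ * (p g * W g + p' g * W g) :=
    mul_nonneg (inv_nonneg.2 hr.le) (by rw [← add_mul]; exact mul_nonneg hpp (hW g))
  split_ifs with h
  · linarith [hs g]
  · rw [zero_add, ← add_mul, mul_comm r⁻¹, mul_assoc, ← div_eq_mul_inv]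
    refine le_trans ?_ (le_mul_of_one_le_right hpp ((one_le_div hr).2 (hS g h)))
    exact (abs_sub _ _).trans_eq (by rw [abs_of_nonneg (hp.1 g), abs_of_nonneg (hp'.1 g)])

lemma card_Icc_ceil_floor_le (a : ℝ) {b : ℝ} (hb : 0 ≤ b) :
    ((Finset.Icc ⌈a - b⌉ ⌊a + b⌋).card : ℝ) ≤ 2 * b + 1 := by
  rw [Int.card_Icc]
  rcases le_total (⌊a + b⌋ + 1 - ⌈a - b⌉) 0 with h | h
  · rw [Int.toNat_of_nonpos h]
    push_cast
    linarith
  · have : ((⌊a + b⌋ + 1 - ⌈a - b⌉).toNat : ℝ) = ((⌊a + b⌋ + 1 - ⌈a - b⌉ : ℤ) : ℝ) := by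
      exact_mod_cast congrArg (Int.cast (R := ℝ)) (Int.toNat_of_nonneg h)
    rw [this]
    push_cast
    linarith [Int.floor_le (a + b), Int.le_ceil (a - b)]

section Comparison

variable {G X ι : Type*} [Group G] [Fintype X] [Fintype ι] (A : LatticeCocycle G X ι)
  {p p' : G → ℝ}

/-- The elements whose lattice displacement lies in a given box form a set of controlled size. -/
lemma LatticeCocycle.exists_box (x : X) (a : ι → ℝ) {b : ℝ} (hb : 0 ≤ b) :
    ∃ S : Finset G, (S.card : ℝ) ≤ Fintype.card X * (2 * b + 1) ^ Fintype.card ι ∧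
      ∀ g ∉ S, ∃ i, b < |A.val x g i - a i| := by
  let T : Finset (X × (ι → ℤ)) :=
    Finset.univ ×ˢ Fintype.piFinset fun i => Finset.Icc ⌈a i - b⌉ ⌊a i + b⌋
  let e := Equiv.ofBijective _ (A.bij x)
  refine ⟨T.image e.symm, ?_, fun g hg => ?_⟩
  · have h1 : ((T.image e.symm).card : ℝ) ≤ T.card := by exact_mod_cast Finset.card_image_le
    refine h1.trans ?_
    simp only [T, Finset.card_product, Fintype.card_piFinset, Nat.cast_mul, Nat.cast_prod,
      Finset.card_univ]
    refine mul_le_mul_of_nonneg_left ?_ (Nat.cast_nonneg _)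
    refine (Finset.prod_le_prod (fun _ _ => Nat.cast_nonneg _)
      fun i _ => card_Icc_ceil_floor_le (a i) hb).trans_eq ?_
    rw [Finset.prod_const, Finset.card_univ]
  · by_contra! hc
    refine hg (Finset.mem_image.2 ⟨e g, ?_, e.symm_apply_apply g⟩)
    simp only [T, Finset.mem_product, Finset.mem_univ, true_and, Fintype.mem_piFinset,
      Finset.mem_Icc]
    intro i
    have h := abs_le.1 (hc i)
    refine ⟨Int.ceil_le.2 ?_, Int.le_floor.2 ?_⟩
    · change a i - b ≤ (A.val x g i : ℝ)
      linarith
    · change (A.val x g i : ℝ) ≤ a i + b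
      linarith

omit [Fintype X] in
lemma LatticeCocycle.corrected_single (ζ : ι → ℝ) (i : ι) (h : X → ℝ) (x : X) (g : G) :
    A.corrected ζ (Pi.single i 1) h x g = (A.val x g i + (h (A.act x g) - h x)) - ζ i := by
  simp only [LatticeCocycle.corrected, Pi.single_apply, ite_mul, one_mul, zero_mul,
    Finset.sum_ite_eq', Finset.mem_univ, if_true]
  ring

/-- Two walks with the same drift and limiting covariance are asymptotically equal in total
variation. -/
theorem tendsto_tv_convPow [Countable G] [Nonempty X] (hp : IsProb p) (hpos : EventuallyPos p)
    (hp' : IsProb p') (hpos' : EventuallyPos p') {ζ : ι → ℝ}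
    (hc : ∀ v : ι → ℝ, ∃ (h : X → ℝ) (Q : ℝ), IsCentred (A.corrected ζ v h) p Q ∧
      IsCentred (A.corrected ζ v h) p' Q) :
    Tendsto (fun n => tv (convPow p n) (convPow p' n)) atTop (nhds 0) := by
  obtain ⟨δ, hδ, hb⟩ := exists_uniform_local_bound A hp hpos hp' hpos' hc
  choose h Q hQ hQ' using fun i : ι => hc (Pi.single i 1)
  let x : X := Classical.arbitrary X
  set c : ι → X → G → ℝ := fun i x g => A.val x g i + (h i (A.act x g) - h i x) with hcdef
  set C : ι → ℝ := fun i => Fintype.card X * Q i with hC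
  have tight : ∀ {q : G → ℝ}, IsProb q → (∀ i, IsCentred (A.corrected ζ (Pi.single i 1) (h i)) q
      (Q i)) → ∀ i (n : ℕ), (Summable fun g => convPow q n g * (c i x g - n * ζ i) ^ 2) ∧
      ∑' g, convPow q n g * (c i x g - n * ζ i) ^ 2 ≤ n * C i := by
    intro q hq hcq i n
    have e : A.corrected ζ (Pi.single i 1) (h i) = fun x g => c i x g - ζ i := by
      funext x g
      exact A.corrected_single ζ i (h i) x g
    have h1 := hcq i
    rw [e] at h1
    refine tsum_convPow_sq_le (act := A.act) hq (fun x => ?_) (fun x g k => ?_) h1.summable h1.mean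
      (fun x => ?_) n x
    · simp [hcdef, A.val_one, A.act_one]
    · simp only [hcdef, A.val_mul, A.act_mul, Pi.add_apply, Int.cast_add]
      ring
    · rw [hC]
      simp only
      rw [← h1.variance]
      exact Finset.single_le_sum (f := fun x => ∑' g, q g * (c i x g - ζ i) ^ 2)
        (fun y _ => tsum_nonneg fun g => mul_nonneg (hq.1 g) (sq_nonneg _)) (Finset.mem_univ x)
  have hC0 : ∀ i, 0 ≤ C i := fun i => by
    have := (tsum_nonneg fun g => mul_nonneg ((isProb_convPow hp 1).1 g) (sq_nonneg _)).trans
      (tight hp hQ i 1).2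
    simpa using this
  set K := ∑ i, C i with hK
  have hK0 : 0 ≤ K := Finset.sum_nonneg fun i _ => hC0 i
  obtain ⟨H, hH0, hH⟩ : ∃ H : ℝ, 0 ≤ H ∧ ∀ i y z, |h i y - h i z| ≤ H := by
    refine ⟨∑ t : ι × X × X, |h t.1 t.2.1 - h t.1 t.2.2|, Finset.sum_nonneg fun _ _ => abs_nonneg _,
      fun i y z => ?_⟩
    exact Finset.single_le_sum (f := fun t : ι × X × X => |h t.1 t.2.1 - h t.1 t.2.2|)
      (fun _ _ => abs_nonneg _) (Finset.mem_univ (i, y, z))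
  have main : ∀ R : ℝ, 0 < R → ∀ n : ℕ, 0 < n → ∑' g, |convPow p n g - convPow p' n g| ≤
      Fintype.card X * (2 * R + 2 * H + 1) ^ Fintype.card ι * δ n + 2 * K / R ^ 2 := by
    intro R hR n hn
    have hn' : (0 : ℝ) < n := by exact_mod_cast hn
    have hs1 : 1 ≤ √(n : ℝ) := Real.one_le_sqrt.2 (by exact_mod_cast hn)
    have hs0 : 0 < √(n : ℝ) := by linarith
    obtain ⟨S, hS, hSg⟩ := A.exists_box x (fun i => n * ζ i) (b := R * √n + H) (by positivity)
    set W : G → ℝ := fun g => ∑ i, (c i x g - n * ζ i) ^ 2 with hW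
    have hδn : 0 ≤ δ n := le_trans (by positivity) (hb n 1)
    have hsup : ∀ g, |convPow p n g - convPow p' n g| ≤ δ n / √n ^ Fintype.card ι := fun g => by
      rw [le_div_iff₀ (by positivity), mul_comm]
      exact hb n g
    have hWS : ∀ g ∉ S, R ^ 2 * n ≤ W g := fun g hg => by
      obtain ⟨i, hi⟩ := hSg g hg
      have h1 : R * √n ≤ |c i x g - n * ζ i| := by
        have h2 := abs_sub_abs_le_abs_sub ((A.val x g i : ℝ) - n * ζ i)
          (-(h i (A.act x g) - h i x))
        rw [abs_neg] at h2
        have h3 := hH i (A.act x g) x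
        have h4 : (A.val x g i : ℝ) - n * ζ i - -(h i (A.act x g) - h i x) =
          c i x g - n * ζ i := by simp only [hcdef]; ring
        rw [h4] at h2
        linarith
      have h5 : R ^ 2 * n ≤ (c i x g - n * ζ i) ^ 2 := by
        rw [← sq_abs (c i x g - n * ζ i), ← Real.sq_sqrt hn'.le, ← mul_pow]
        rw [Real.sq_sqrt hn'.le]
        exact pow_le_pow_left₀ (by positivity) h1 2
      exact h5.trans (Finset.single_le_sum (f := fun i => (c i x g - n * ζ i) ^ 2)
        (fun i _ => sq_nonneg _) (Finset.mem_univ i))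
    have hWq : ∀ {q : G → ℝ}, IsProb q → (∀ i, IsCentred (A.corrected ζ (Pi.single i 1) (h i)) q
        (Q i)) → (Summable fun g => convPow q n g * W g) ∧
        ∑' g, convPow q n g * W g ≤ n * K := by
      intro q hq hcq
      simp only [hW, Finset.mul_sum, hK]
      refine ⟨summable_sum fun i _ => (tight hq hcq i n).1, ?_⟩
      rw [Summable.tsum_finsetSum fun i _ => (tight hq hcq i n).1]
      exact Finset.sum_le_sum fun i _ => (tight hq hcq i n).2
    refine (tsum_abs_sub_le (isProb_convPow hp n) (isProb_convPow hp' n)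
      (fun g => Finset.sum_nonneg fun i _ => sq_nonneg _) (r := R ^ 2 * n) (by positivity) S hWS
      hsup (hWq hp hQ).1 (hWq hp' hQ').1).trans (add_le_add ?_ ?_)
    · have h6 : (2 * (R * √n + H) + 1) ≤ (2 * R + 2 * H + 1) * √n := by nlinarith
      have h7 : (S.card : ℝ) ≤ Fintype.card X * ((2 * R + 2 * H + 1) * √n) ^ Fintype.card ι :=
        hS.trans (mul_le_mul_of_nonneg_left (pow_le_pow_left₀ (by positivity) h6 _)
          (Nat.cast_nonneg _))
      refine (mul_le_mul_of_nonneg_right h7 (by positivity)).trans_eq ?_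
      rw [mul_pow]
      field_simp
    · have h8 := add_le_add (hWq hp hQ).2 (hWq hp' hQ').2
      refine (mul_le_mul_of_nonneg_left h8 (by positivity)).trans_eq ?_
      field_simp
      ring
  have hlim : Tendsto (fun n => ∑' g, |convPow p n g - convPow p' n g|) atTop (nhds 0) := by
    rw [Metric.tendsto_nhds]
    intro ε hε
    set R := √((4 * K + 1) / ε) with hRdef
    have hq : 0 < (4 * K + 1) / ε := by positivity
    have hR : 0 < R := Real.sqrt_pos.2 hq
    have hKR : 2 * K / R ^ 2 < ε / 2 + ε / 4 := by
      rw [hRdef, Real.sq_sqrt hq.le, div_lt_iff₀ hq]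
      field_simp
      nlinarith
    have hδ' := hδ.const_mul (Fintype.card X * (2 * R + 2 * H + 1) ^ Fintype.card ι)
    rw [mul_zero] at hδ'
    filter_upwards [hδ'.eventually (gt_mem_nhds (show 0 < ε / 4 by positivity)),
      eventually_gt_atTop 0] with n hn hn0
    rw [dist_zero_right, Real.norm_of_nonneg (tsum_nonneg fun _ => abs_nonneg _)]
    linarith [main R hR n hn0]
  have := hlim.const_mul (1 / 2)
  rwa [mul_zero] at this

end Comparison

section Existence

variable {Γ ι : Type*} [Group Γ]

lemma out_inv_mul_mul_out_mem (Λ : Subgroup Γ) (x : Γ ⧸ Λ) (g : Γ) :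
    x.out⁻¹ * (g * (g⁻¹ • x).out) ∈ Λ := by
  rw [← QuotientGroup.eq, QuotientGroup.out_eq', ← smul_eq_mul, ← MulAction.Quotient.smul_mk,
    QuotientGroup.out_eq', smul_inv_smul]

/-- The lattice cocycle over the coset space of a free abelian subgroup. -/
noncomputable def LatticeCocycle.ofSubgroup (Λ : Subgroup Γ) (ψ : Λ ≃* Multiplicative (ι → ℤ)) :
    LatticeCocycle Γ (Γ ⧸ Λ) ι where
  act x g := g⁻¹ • x
  val x g := (ψ ⟨x.out⁻¹ * (g * (g⁻¹ • x).out), out_inv_mul_mul_out_mem Λ x g⟩).toAdd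
  act_one x := by simp
  act_mul x g h := by rw [_root_.mul_inv_rev, SemigroupAction.mul_smul]
  val_mul x g h := by
    rw [← toAdd_mul, ← map_mul]
    congr 2
    refine Subtype.ext ?_
    simp only [Subgroup.coe_mul, _root_.mul_inv_rev, SemigroupAction.mul_smul]
    simp only [mul_assoc, mul_inv_cancel_left]
  bij x := by
    refine ⟨fun g h hgh => ?_, fun z => ?_⟩
    · obtain ⟨h1, h2⟩ := Prod.ext_iff.1 hgh
      have h3 := congrArg Subtype.val (ψ.injective (Multiplicative.toAdd.injective h2))
      simp only at h1 h3
      rw [h1] at h3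
      exact mul_right_cancel (mul_left_cancel h3)
    · obtain ⟨l, hl⟩ := ψ.surjective (Multiplicative.ofAdd z.2)
      have hact : (x.out * l * z.1.out⁻¹)⁻¹ • x = z.1 := by
        rw [inv_smul_eq_iff]
        conv_lhs => rw [← QuotientGroup.out_eq' x]
        conv_rhs => rw [← QuotientGroup.out_eq' z.1]
        rw [MulAction.Quotient.smul_mk, QuotientGroup.eq]
        simp [mul_assoc]
      refine ⟨x.out * l * z.1.out⁻¹, Prod.ext hact ?_⟩
      simp only
      rw [← toAdd_ofAdd z.2, ← hl]
      congr 2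
      refine Subtype.ext ?_
      simp only [hact]
      group

/-- A finitely generated virtually abelian group admits a lattice cocycle over a finite set. -/
lemma exists_latticeCocycle (hFG : Group.FG Γ) (hVA : VirtAbelian Γ) :
    ∃ (Λ : Subgroup Γ) (_ : Finite (Γ ⧸ Λ)) (ι : Type) (_ : Finite ι),
      Nonempty (LatticeCocycle Γ (Γ ⧸ Λ) ι) := by
  obtain ⟨A, hA, hcomm⟩ := hVA
  have : A.FiniteIndex := ⟨hA⟩
  have : Group.FG A := inferInstance
  let : CommGroup A := { (inferInstance : Group A) with mul_comm := hcomm }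
  obtain ⟨ι, j, hι, hj, p, hpp, e, ⟨f⟩⟩ := CommGroup.equiv_free_prod_prod_multiplicative_zmod A
  have : ∀ i, NeZero (p i ^ e i) := fun i => ⟨pow_ne_zero _ (hpp i).ne_zero⟩
  have : Finite ((i : ι) → Multiplicative (ZMod (p i ^ e i))) := by
    have : ∀ i, Finite (Multiplicative (ZMod (p i ^ e i))) := fun i =>
      inferInstanceAs (Finite (ZMod (p i ^ e i)))
    infer_instance
  let u : (j → Multiplicative ℤ) →* Γ :=
    A.subtype.comp (f.symm.toMonoidHom.comp (MonoidHom.inl _ _))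
  have hu : Function.Injective u := fun a b hab => by
    have h1 := f.symm.injective (A.subtype_injective hab)
    exact congrArg Prod.fst h1
  have hidx : u.range.index ≠ 0 := by
    have h1 : u.range = (((MonoidHom.inl (j → Multiplicative ℤ)
        ((i : ι) → Multiplicative (ZMod (p i ^ e i)))).range).map f.symm.toMonoidHom).map
          A.subtype := by
      rw [MonoidHom.map_range, MonoidHom.map_range]
    rw [h1, Subgroup.index_map_subtype]
    refine mul_ne_zero ?_ hA
    have h2 := Subgroup.index_map_equiv (MonoidHom.inl (j → Multiplicative ℤ)
        ((i : ι) → Multiplicative (ZMod (p i ^ e i)))).range f.symm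
    have h3 : (MonoidHom.inl (j → Multiplicative ℤ)
        ((i : ι) → Multiplicative (ZMod (p i ^ e i)))).range = (MonoidHom.snd _ _).ker := by
      ext z
      simp only [MonoidHom.mem_range, MonoidHom.mem_ker, MonoidHom.coe_snd]
      exact ⟨fun ⟨y, hy⟩ => hy ▸ rfl, fun hz => ⟨z.1, Prod.ext rfl hz.symm⟩⟩
    rw [h3] at h2
    rw [h3]
    exact h2.trans_ne Subgroup.FiniteIndex.index_ne_zero
  have : u.range.FiniteIndex := ⟨hidx⟩
  let ψ : u.range ≃* Multiplicative (j → ℤ) :=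
    (MonoidHom.ofInjective hu).symm.trans
      (MulEquiv.mk' (Equiv.refl (j → Multiplicative ℤ)) fun _ _ => rfl :
        (j → Multiplicative ℤ) ≃* Multiplicative (j → ℤ))
  exact ⟨u.range, inferInstance, j, inferInstance, ⟨LatticeCocycle.ofSubgroup u.range ψ⟩⟩

end Existence

section Product

variable {G H X Y ι κ : Type*} [Group G] [Group H]

/-- The product of two lattice cocycles. -/
def LatticeCocycle.prod (A : LatticeCocycle G X ι) (B : LatticeCocycle H Y κ) :
    LatticeCocycle (G × H) (X × Y) (ι ⊕ κ) where
  act z g := (A.act z.1 g.1, B.act z.2 g.2)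
  val z g := Sum.elim (A.val z.1 g.1) (B.val z.2 g.2)
  act_one z := by simp [A.act_one, B.act_one]
  act_mul z g h := by simp [A.act_mul, B.act_mul]
  val_mul z g h := by
    funext i
    cases i <;> simp [A.val_mul, B.val_mul]
  bij z := by
    refine ⟨fun g h hgh => ?_, fun w => ?_⟩
    · simp only [Prod.mk.injEq] at hgh
      obtain ⟨⟨h1, h2⟩, h3⟩ := hgh
      refine Prod.ext ((A.bij z.1).1 (Prod.ext h1 ?_)) ((B.bij z.2).1 (Prod.ext h2 ?_))
      · exact funext fun i => congrFun h3 (Sum.inl i)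
      · exact funext fun i => congrFun h3 (Sum.inr i)
    · obtain ⟨g, hg⟩ := (A.bij z.1).2 (w.1.1, fun i => w.2 (Sum.inl i))
      obtain ⟨h, hh⟩ := (B.bij z.2).2 (w.1.2, fun i => w.2 (Sum.inr i))
      simp only [Prod.mk.injEq] at hg hh
      refine ⟨(g, h), Prod.ext (Prod.ext hg.1 hh.1) (funext fun i => ?_)⟩
      cases i
      · exact congrFun hg.2 _
      · exact congrFun hh.2 _

lemma convPow_pos_of_hom {p : G → ℝ} {q : H → ℝ} (hp : IsProb p) (hq : IsProb q) (f : G →* H)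
    (hf : ∀ g, 0 < p g → 0 < q (f g)) (n : ℕ) : ∀ g, 0 < convPow p n g → 0 < convPow q n (f g) := by
  induction n with
  | zero =>
    intro g hg
    have : g = 1 := by
      by_contra hc
      simp [convPow, hc] at hg
    simp [convPow, this]
  | succ n ih =>
    intro g hg
    obtain ⟨h, h1, h2⟩ := (conv_pos_iff (isProb_convPow hp n) hp g).1 hg
    refine (conv_pos_iff (isProb_convPow hq n) hq (f g)).2 ⟨f h, ih h h1, ?_⟩
    rw [← map_inv, ← map_mul]
    exact hf _ h2

lemma EventuallyPos.of_hom {p : G → ℝ} {q : H → ℝ} (hpos : EventuallyPos p) (hp : IsProb p)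
    (hq : IsProb q) (f : G →* H) (hfs : Function.Surjective f)
    (hf : ∀ g, 0 < p g → 0 < q (f g)) : EventuallyPos q := fun y => by
  obtain ⟨g, rfl⟩ := hfs y
  exact (hpos g).mono fun n hn => convPow_pos_of_hom hp hq f hf n g hn

section Marginals

variable {G H : Type*} {p : G × H → ℝ}

lemma IsProb.summable_marg1_smul {E : Type*} [NormedAddCommGroup E] [NormedSpace ℝ E]
    [CompleteSpace E] (hp : IsProb p) {f : G → E} (h : Summable fun z => p z • f z.1) :
    (Summable fun g => marg1 p g • f g) ∧ ∑' g, marg1 p g • f g = ∑' z, p z • f z.1 := by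
  have e : ∀ g, ∑' k, p (g, k) • f g = marg1 p g • f g := fun g =>
    Summable.tsum_smul_const (hp.2.summable.prod_factor g) _
  refine ⟨h.prod.congr e, ?_⟩
  rw [h.tsum_prod]
  exact (tsum_congr e).symm

lemma IsProb.summable_of_marg1 (hp : IsProb p) {f : G → ℝ} (hf : ∀ g, 0 ≤ f g)
    (h : Summable fun g => marg1 p g * f g) : Summable fun z => p z * f z.1 := by
  refine (summable_prod_of_nonneg fun z => mul_nonneg (hp.1 z) (hf _)).2 ⟨fun g => ?_, ?_⟩
  · exact (hp.2.summable.prod_factor g).mul_right (f g)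
  · refine h.congr fun g => ?_
    exact (tsum_mul_right (a := f g) (f := fun k => p (g, k))).symm

lemma IsProb.marg1 (hp : IsProb p) : IsProb (marg1 p) := by
  refine ⟨fun g => tsum_nonneg fun k => hp.1 _, ?_⟩
  have h := hp.summable_marg1_smul (f := fun _ => (1 : ℝ)) (by simpa using hp.2.summable)
  simp only [smul_eq_mul, mul_one] at h
  rw [← hp.2.tsum_eq, ← h.2]
  exact h.1.hasSum

lemma marg1_pos (hp : IsProb p) {z : G × H} (hz : 0 < p z) : 0 < NSVA.marg1 p z.1 :=
  (hp.2.summable.prod_factor z.1).tsum_pos (fun _ => hp.1 _) z.2 hz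

lemma IsProb.swap (hp : IsProb p) : IsProb fun z : H × G => p z.swap :=
  ⟨fun _ => hp.1 _, (Equiv.prodComm H G).hasSum_iff.2 hp.2⟩

lemma IsProb.summable_of_marg2 (hp : IsProb p) {f : H → ℝ} (hf : ∀ g, 0 ≤ f g)
    (h : Summable fun g => marg2 p g * f g) : Summable fun z => p z * f z.2 :=
  (Equiv.prodComm H G).summable_iff.1 (hp.swap.summable_of_marg1 hf h)

lemma IsProb.marg2 (hp : IsProb p) : IsProb (marg2 p) := hp.swap.marg1

lemma marg2_pos (hp : IsProb p) {z : G × H} (hz : 0 < p z) : 0 < NSVA.marg2 p z.2 :=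
  marg1_pos hp.swap (z := z.swap) hz

lemma IsProb.summable_marg2_smul {E : Type*} [NormedAddCommGroup E] [NormedSpace ℝ E]
    [CompleteSpace E] (hp : IsProb p) {f : H → E} (h : Summable fun z => p z • f z.2) :
    (Summable fun g => NSVA.marg2 p g • f g) ∧
      ∑' g, NSVA.marg2 p g • f g = ∑' z, p z • f z.2 := by
  obtain ⟨h1, h2⟩ := hp.swap.summable_marg1_smul (f := f) ((Equiv.prodComm H G).summable_iff.2 h)
  exact ⟨h1, h2.trans ((Equiv.prodComm H G).tsum_eq fun z => p z • f z.2)⟩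

lemma IsProb.prodMul {q : G → ℝ} {r : H → ℝ} (hq : IsProb q) (hr : IsProb r) :
    IsProb fun z : G × H => q z.1 * r z.2 := by
  refine ⟨fun z => mul_nonneg (hq.1 _) (hr.1 _), ?_⟩
  have h := hq.2.mul hr.2 (hq.2.summable.mul_of_nonneg hr.2.summable hq.1 hr.1)
  rwa [one_mul] at h

lemma marg1_prodMul (q : G → ℝ) {r : H → ℝ} (hr : IsProb r) :
    NSVA.marg1 (fun z : G × H => q z.1 * r z.2) = q := by
  funext g
  simp only [NSVA.marg1, tsum_mul_left, hr.2.tsum_eq, mul_one]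

lemma marg2_prodMul {q : G → ℝ} (hq : IsProb q) (r : H → ℝ) :
    NSVA.marg2 (fun z : G × H => q z.1 * r z.2) = r := by
  funext g
  simp only [NSVA.marg2, tsum_mul_right, hq.2.tsum_eq, one_mul]

end Marginals

lemma convPow_prodMul {q : G → ℝ} {r : H → ℝ} (hq : IsProb q) (hr : IsProb r) (n : ℕ) :
    convPow (fun z : G × H => q z.1 * r z.2) n = fun z => convPow q n z.1 * convPow r n z.2 := by
  induction n with
  | zero =>
    funext z
    simp only [convPow, Prod.ext_iff, Prod.fst_one, Prod.snd_one, ite_and]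
    split_ifs <;> simp
  | succ n ih =>
    funext z
    simp only [convPow, ih, conv]
    have h1 := summable_conv_term (isProb_convPow hq n) hq z.1
    have h2 := summable_conv_term (isProb_convPow hr n) hr z.2
    rw [h1.tsum_mul_tsum h2 (h1.mul_of_nonneg h2
      (fun g => mul_nonneg ((isProb_convPow hq n).1 _) (hq.1 _))
      (fun g => mul_nonneg ((isProb_convPow hr n).1 _) (hr.1 _)))]
    refine tsum_congr fun w => ?_
    simp only [Prod.fst_mul, Prod.snd_mul, Prod.fst_inv, Prod.snd_inv]
    ring

end Product

section Moments

variable {G X ι : Type*} [Group G]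

lemma exists_list_prod_eq_length_wordLength {S : Finset G} (hinv : ∀ s ∈ S, s⁻¹ ∈ S)
    (hS : Subgroup.closure (S : Set G) = ⊤) (g : G) :
    ∃ l : List G, (∀ s ∈ l, s ∈ S) ∧ l.length = wordLength S g ∧ l.prod = g := by
  refine Nat.sInf_mem (s := {n : ℕ | ∃ l : List G, (∀ s ∈ l, s ∈ S) ∧ l.length = n ∧ l.prod = g}) ?_
  have hg : g ∈ Submonoid.closure ((S : Set G) ∪ (S : Set G)⁻¹) := by
    rw [← Subgroup.closure_toSubmonoid, Subgroup.mem_toSubmonoid, hS]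
    trivial
  obtain ⟨l, hl, hlg⟩ := Submonoid.exists_list_of_mem_closure hg
  refine ⟨l.length, l, fun s hs => ?_, rfl, hlg⟩
  rcases hl s hs with h | h
  · exact h
  · simpa using hinv _ (Set.mem_inv.1 h)

/-- A lattice cocycle over a finite set grows at most linearly in the word length. -/
lemma LatticeCocycle.exists_abs_val_le (A : LatticeCocycle G X ι) [Finite X] [Finite ι]
    {S : Finset G} (hinv : ∀ s ∈ S, s⁻¹ ∈ S) (hS : Subgroup.closure (S : Set G) = ⊤) :
    ∃ C : ℝ, ∀ x g i, |(A.val x g i : ℝ)| ≤ C * wordLength S g := by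
  obtain ⟨C, hC⟩ := (Set.finite_range fun z : X × S × ι => |(A.val z.1 z.2.1 z.2.2 : ℝ)|).bddAbove
  have hl : ∀ l : List G, (∀ s ∈ l, s ∈ S) → ∀ x i, |(A.val x l.prod i : ℝ)| ≤ C * l.length := by
    intro l
    induction l with
    | nil => intro _ x i; simp [A.val_one]
    | cons s l ih =>
      intro hl x i
      have h1 : |(A.val x s i : ℝ)| ≤ C :=
        hC ⟨(x, ⟨s, hl s (by simp)⟩, i), rfl⟩
      have h2 := ih (fun t ht => hl t (by simp [ht])) (A.act x s) i
      rw [List.prod_cons, A.val_mul, Pi.add_apply, List.length_cons]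
      push_cast
      linarith [abs_add_le (A.val x s i : ℝ) (A.val (A.act x s) l.prod i)]
  refine ⟨C, fun x g i => ?_⟩
  obtain ⟨l, h1, h2, h3⟩ := exists_list_prod_eq_length_wordLength hinv hS g
  simpa only [h2, h3] using hl l h1 x i

lemma FinSecondMoment.summable_val_sq (A : LatticeCocycle G X ι) [Finite X] [Finite ι]
    {p : G → ℝ} (hp : IsProb p) (h : FinSecondMoment p) (x : X) (i : ι) :
    Summable fun g => p g * (A.val x g i : ℝ) ^ 2 := by
  obtain ⟨S, hinv, hS, hs⟩ := h
  obtain ⟨C, hC⟩ := A.exists_abs_val_le hinv hS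
  refine (hs.mul_left (C ^ 2)).of_nonneg_of_le (fun g => mul_nonneg (hp.1 g) (sq_nonneg _))
    fun g => ?_
  have h1 : (A.val x g i : ℝ) ^ 2 ≤ (C * wordLength S g) ^ 2 := by
    rw [← sq_abs]
    exact pow_le_pow_left₀ (abs_nonneg _) (hC x g i) 2
  calc _ ≤ p g * (C * wordLength S g) ^ 2 := mul_le_mul_of_nonneg_left h1 (hp.1 g)
    _ = _ := by ring

/-- `f` is square integrable for the weights `p`. -/
def SqSummable (p f : G → ℝ) : Prop := Summable fun g => p g * f g ^ 2

variable {p : G → ℝ}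

omit [Group G] in
lemma SqSummable.mul (hp : IsProb p) {f k : G → ℝ} (hf : SqSummable p f) (hk : SqSummable p k) :
    Summable fun g => p g * (f g * k g) := by
  refine Summable.of_norm_bounded (hf.add hk) fun g => ?_
  rw [Real.norm_eq_abs, abs_mul, abs_of_nonneg (hp.1 g), ← mul_add]
  refine mul_le_mul_of_nonneg_left ?_ (hp.1 g)
  rw [abs_le]
  constructor <;> nlinarith [sq_nonneg (f g + k g), sq_nonneg (f g - k g)]

omit [Group G] in
lemma SqSummable.of_bounded (hp : IsProb p) {f : G → ℝ} {C : ℝ} (hf : ∀ g, |f g| ≤ C) :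
    SqSummable p f := by
  refine (hp.2.summable.mul_right (C ^ 2)).of_nonneg_of_le
    (fun g => mul_nonneg (hp.1 g) (sq_nonneg _)) fun g => mul_le_mul_of_nonneg_left ?_ (hp.1 g)
  rw [← sq_abs]
  exact pow_le_pow_left₀ (abs_nonneg _) (hf g) 2

omit [Group G] in
lemma SqSummable.summable (hp : IsProb p) {f : G → ℝ} (hf : SqSummable p f) :
    Summable fun g => p g * f g := by
  simpa using hf.mul hp (SqSummable.of_bounded (f := fun _ => 1) (C := 1) hp (by simp))

omit [Group G] in
lemma SqSummable.add (hp : IsProb p) {f k : G → ℝ} (hf : SqSummable p f) (hk : SqSummable p k) :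
    SqSummable p fun g => f g + k g := by
  refine ((Summable.add hf hk).add ((hf.mul hp hk).mul_left 2)).congr fun g => ?_
  ring

omit [Group G] in
lemma SqSummable.const_mul {f : G → ℝ} (hf : SqSummable p f) (c : ℝ) :
    SqSummable p fun g => c * f g := by
  refine (Summable.mul_left (c ^ 2) hf).congr fun g => ?_
  ring

omit [Group G] in
lemma SqSummable.sum (hp : IsProb p) (s : Finset ι) {f : ι → G → ℝ}
    (hf : ∀ i ∈ s, SqSummable p (f i)) : SqSummable p fun g => ∑ i ∈ s, f i g := by
  induction s using Finset.induction_on with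
  | empty => simp [SqSummable]
  | insert i s hi ih =>
    simp only [Finset.sum_insert hi]
    exact (hf i (by simp)).add hp (ih fun j hj => hf j (by simp [hj]))

variable [Fintype X] [Fintype ι] (A : LatticeCocycle G X ι)

/-- The mean increment of a lattice cocycle. -/
noncomputable def LatticeCocycle.meanDrift (p : G → ℝ) (i : ι) : ℝ :=
  (Fintype.card X : ℝ)⁻¹ * ∑ x, ∑' g, p g * A.val x g i

lemma LatticeCocycle.sqSummable_corrected (hp : IsProb p)
    (h2 : ∀ x i, SqSummable p fun g => (A.val x g i : ℝ)) (ζ v : ι → ℝ) (h : X → ℝ) (x : X) :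
    SqSummable p (A.corrected ζ v h x) := by
  obtain ⟨C, hC⟩ := (Set.finite_range fun y : X => |-∑ i, v i * ζ i + (h y - h x)|).bddAbove
  refine (SqSummable.add hp (SqSummable.sum hp Finset.univ fun i _ => (h2 x i).const_mul (v i))
    (SqSummable.of_bounded hp (f := fun g => -∑ i, v i * ζ i + (h (A.act x g) - h x)) (C := C)
    fun g => hC ⟨A.act x g, rfl⟩)).congr fun g => ?_
  rw [corrected]
  ring

/-- A coboundary correction makes the centred cocycle a martingale increment. -/
lemma LatticeCocycle.exists_corrected_mean_eq_zero [Nonempty X] (hp : IsProb p)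
    (hpos : EventuallyPos p) (h2 : ∀ x i, SqSummable p fun g => (A.val x g i : ℝ)) (v : ι → ℝ) :
    ∃ h : X → ℝ, ∀ x, ∑' g, p g * A.corrected (A.meanDrift p) v h x g = 0 := by
  have hcard : (Fintype.card X : ℝ) ≠ 0 := by exact_mod_cast Fintype.card_ne_zero
  set m : X → ℝ := fun x => ∑' g, p g * ∑ i, v i * (A.val x g i : ℝ) with hm
  set c : ℝ := ∑ i, v i * A.meanDrift p i with hc
  have hsum : ∑ x, m x = Fintype.card X * c := by
    have e : ∀ x, m x = ∑ i, v i * ∑' g, p g * (A.val x g i : ℝ) := fun x => by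
      rw [hm]
      simp only [Finset.mul_sum]
      rw [Summable.tsum_finsetSum fun i _ => ?_]
      · refine Finset.sum_congr rfl fun i _ => ?_
        rw [← tsum_mul_left]
        exact tsum_congr fun g => by ring
      · exact (((h2 x i).summable hp).mul_left (v i)).congr fun g => by ring
    simp only [e, hc, meanDrift, Finset.mul_sum]
    rw [Finset.sum_comm]
    refine Finset.sum_congr rfl fun i _ => Finset.sum_congr rfl fun x _ => ?_
    field_simp
  obtain ⟨k, hk⟩ := exists_poisson A hp hpos (fun x => ((c - m x : ℝ) : ℂ)) (by
    rw [← Complex.ofReal_sum, Finset.sum_sub_distrib, hsum]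
    simp)
  refine ⟨fun x => (k x).re, fun x => ?_⟩
  have hb : SqSummable p fun g => (k (A.act x g)).re := by
    obtain ⟨C, hC⟩ := (Set.finite_range fun y : X => |(k y).re|).bddAbove
    exact SqSummable.of_bounded hp fun g => hC ⟨A.act x g, rfl⟩
  have hkx : ∑' g, p g * (k (A.act x g)).re - (k x).re = c - m x := by
    have h1 := congrArg Complex.re (hk x)
    have h2 : Summable fun g => p g • (1 * k (A.act x g)) := by
      refine Summable.of_norm_bounded (hp.2.summable.mul_right ‖k‖) fun g => ?_
      rw [norm_smul, one_mul, Real.norm_of_nonneg (hp.1 g)]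
      exact mul_le_mul_of_nonneg_left (norm_le_pi_norm _ _) (hp.1 g)
    rw [Complex.sub_re, Complex.ofReal_re, twist, Complex.re_tsum h2] at h1
    simpa using h1
  have hs : Summable fun g => p g * ∑ i, v i * (A.val x g i : ℝ) :=
    (SqSummable.sum hp Finset.univ fun i _ => (h2 x i).const_mul (v i)).summable hp
  have e : ∀ g, p g * A.corrected (A.meanDrift p) v (fun x => (k x).re) x g =
      p g * ∑ i, v i * (A.val x g i : ℝ) + p g * (k (A.act x g)).re - p g * (c + (k x).re) :=
    fun g => by rw [corrected]; ring
  rw [tsum_congr e, (hs.add (hb.summable hp)).tsum_sub (hp.2.summable.mul_right _),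
    hs.tsum_add (hb.summable hp), tsum_mul_right, hp.2.tsum_eq]
  linarith

end Moments

section Decoupling

variable {G H X Y ι κ : Type*} [Fintype X] [Fintype Y]

/-- The second moment of the sum of two centred functionals depends on the marginals only,
as soon as one of them averages to zero over the finite factor. -/
lemma IsCentred.prod [Nonempty X] [Nonempty Y] {p : G × H → ℝ} (hp : IsProb p)
    {q : G → ℝ} {r : H → ℝ} (hq : marg1 p = q) (hr : marg2 p = r)
    {ω : X → G → ℝ} {η : Y → H → ℝ}
    (hω : ∀ x, SqSummable (q) (ω x)) (hη : ∀ y, SqSummable (r) (η y))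
    (hω0 : ∀ x, ∑' g, q g * ω x g = 0) (hη0 : ∀ y, ∑' g, r g * η y g = 0)
    (hsum : ∀ g, ∑ x, ω x g = 0) :
    IsCentred (fun (z : X × Y) (s : G × H) => ω z.1 s.1 + η z.2 s.2) p
      ((Fintype.card Y * ∑ x, ∑' g, q g * ω x g ^ 2 +
        Fintype.card X * ∑ y, ∑' g, r g * η y g ^ 2) / Fintype.card (X × Y)) := by
  subst hq hr
  have hω' : ∀ x, SqSummable p fun s => ω x s.1 := fun x =>
    hp.summable_of_marg1 (f := fun g => ω x g ^ 2) (fun g => sq_nonneg _) (hω x)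
  have hη' : ∀ y, SqSummable p fun s => η y s.2 := fun y =>
    hp.summable_of_marg2 (f := fun g => η y g ^ 2) (fun g => sq_nonneg _) (hη y)
  refine ⟨fun z => (hω' z.1).add hp (hη' z.2), fun z => ?_, ?_⟩
  · have h1 := (hω' z.1).summable hp
    have h2 := (hη' z.2).summable hp
    simp only [mul_add]
    rw [h1.tsum_add h2]
    have e1 := (hp.summable_marg1_smul (f := ω z.1) h1).2
    have e2 := (hp.summable_marg2_smul (f := η z.2) h2).2
    simp only [smul_eq_mul] at e1 e2
    rw [← e1, ← e2, hω0, hη0, add_zero]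
  · have e : ∀ z : X × Y, ∑' s, p s * (ω z.1 s.1 + η z.2 s.2) ^ 2 =
        ∑' g, marg1 p g * ω z.1 g ^ 2 + ∑' g, marg2 p g * η z.2 g ^ 2 +
          2 * ∑' s, p s * (ω z.1 s.1 * η z.2 s.2) := fun z => by
      have e1 := (hp.summable_marg1_smul (f := fun g => ω z.1 g ^ 2) (hω' z.1)).2
      have e2 := (hp.summable_marg2_smul (f := fun g => η z.2 g ^ 2) (hη' z.2)).2
      simp only [smul_eq_mul] at e1 e2
      rw [e1, e2, ← tsum_mul_left, ← Summable.tsum_add (hω' z.1) (hη' z.2),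
        ← (Summable.add (hω' z.1) (hη' z.2)).tsum_add (((hω' z.1).mul hp (hη' z.2)).mul_left 2)]
      exact tsum_congr fun s => by ring
    have hcross : ∀ y, ∑ x, ∑' s, p s * (ω x s.1 * η y s.2) = 0 := fun y => by
      rw [← Summable.tsum_finsetSum fun x _ => (hω' x).mul hp (hη' y)]
      simp only [← Finset.mul_sum, ← Finset.sum_mul, hsum, zero_mul, mul_zero, tsum_zero]
    have hc : (Fintype.card (X × Y) : ℝ) ≠ 0 := by exact_mod_cast Fintype.card_ne_zero
    rw [mul_div_cancel₀ _ hc]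
    simp only [e, Finset.sum_add_distrib, ← Finset.mul_sum, Fintype.sum_prod_type_right, hcross]
    simp [Finset.mul_sum]

variable [Group G] [Group H] [Fintype ι] [Fintype κ]

omit [Fintype X] [Fintype Y] in
lemma LatticeCocycle.prod_corrected (A : LatticeCocycle G X ι) (B : LatticeCocycle H Y κ)
    (ζ : ι → ℝ) (ξ : κ → ℝ) (v : ι ⊕ κ → ℝ) (h : X → ℝ) (k : Y → ℝ) :
    (A.prod B).corrected (Sum.elim ζ ξ) v (fun z => h z.1 + k z.2) = fun z s =>
      A.corrected ζ (v ∘ Sum.inl) h z.1 s.1 + B.corrected ξ (v ∘ Sum.inr) k z.2 s.2 := by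
  funext z s
  simp only [corrected, prod, Fintype.sum_sum_type, Sum.elim_inl, Sum.elim_inr, Function.comp_apply]
  ring

omit [Fintype ι] in
/-- The transfer homomorphism vanishes on a group without homomorphisms to `ℤ`. -/
lemma LatticeCocycle.sum_val_eq_zero (A : LatticeCocycle G X ι)
    (hhom : ∀ (f : G →* Multiplicative ℤ) (g : G), f g = 1) (g : G) (i : ι) :
    ∑ x, A.val x g i = 0 := by
  refine Multiplicative.ofAdd.injective (hhom
    { toFun := fun g => Multiplicative.ofAdd (∑ x, A.val x g i)
      map_one' := by simp [A.val_one]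
      map_mul' := fun g h => ?_ } g)
  simp only [A.val_mul, Pi.add_apply, Finset.sum_add_distrib, ofAdd_add]
  rw [A.sum_act g fun x => A.val x h i]

lemma LatticeCocycle.sum_corrected_eq_zero (A : LatticeCocycle G X ι)
    (hval : ∀ g i, ∑ x, A.val x g i = 0) (p : G → ℝ)
    (h2 : ∀ x i, Summable fun g => p g * (A.val x g i : ℝ)) (v : ι → ℝ) (h : X → ℝ) (g : G) :
    ∑ x, A.corrected (A.meanDrift p) v h x g = 0 := by
  have hd : ∀ i, A.meanDrift p i = 0 := fun i => by
    rw [meanDrift, ← Summable.tsum_finsetSum fun x _ => h2 x i]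
    simp only [← Finset.mul_sum, ← Int.cast_sum, hval]
    simp
  simp only [corrected, hd, mul_zero, Finset.sum_const_zero, sub_zero, Finset.sum_add_distrib,
    Finset.sum_sub_distrib]
  rw [A.sum_act g h, sub_self, add_zero, Finset.sum_comm]
  simp only [← Finset.mul_sum, ← Int.cast_sum, hval]
  simp

/-- Decoupling for a pair of lattice cocycles, the first of which has zero transfer. -/
lemma tendsto_tv_prodMul [Nonempty X] [Nonempty Y] [Countable G] [Countable H]
    (A : LatticeCocycle G X ι) (B : LatticeCocycle H Y κ) {p : G × H → ℝ}
    (hp : IsProb p) (hpos : EventuallyPos p) (h2 : FinSecondMoment p)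
    (hval : ∀ g i, ∑ x, A.val x g i = 0) :
    Tendsto (fun n => tv (convPow p n)
      (fun z => convPow (marg1 p) n z.1 * convPow (marg2 p) n z.2)) atTop (nhds 0) := by
  have hp1 := hp.marg1
  have hp2 := hp.marg2
  have hpp := hp1.prodMul hp2
  have hpos1 : EventuallyPos (marg1 p) := hpos.of_hom hp hp1 (MonoidHom.fst G H)
    Prod.fst_surjective fun z hz => marg1_pos hp hz
  have hpos2 : EventuallyPos (marg2 p) := hpos.of_hom hp hp2 (MonoidHom.snd G H)
    Prod.snd_surjective fun z hz => marg2_pos hp hz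
  have hposp : EventuallyPos fun z : G × H => marg1 p z.1 * marg2 p z.2 :=
    hpos.of_hom hp hpp (MonoidHom.id _) Function.surjective_id fun z hz =>
      mul_pos (marg1_pos hp hz) (marg2_pos hp hz)
  have hA : ∀ x i, SqSummable (marg1 p) fun g => (A.val x g i : ℝ) := fun x i =>
    (hp.summable_marg1_smul (f := fun g => (A.val x g i : ℝ) ^ 2)
      (h2.summable_val_sq (A.prod B) hp (x, Classical.arbitrary Y) (Sum.inl i))).1
  have hB : ∀ y i, SqSummable (marg2 p) fun g => (B.val y g i : ℝ) := fun y i =>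
    (hp.summable_marg2_smul (f := fun g => (B.val y g i : ℝ) ^ 2)
      (h2.summable_val_sq (A.prod B) hp (Classical.arbitrary X, y) (Sum.inr i))).1
  simp only [← convPow_prodMul hp1 hp2]
  refine tendsto_tv_convPow (A.prod B) hp hpos hpp hposp
    (ζ := Sum.elim (A.meanDrift (marg1 p)) (B.meanDrift (marg2 p))) fun v => ?_
  obtain ⟨h, hh⟩ := A.exists_corrected_mean_eq_zero hp1 hpos1 hA (v ∘ Sum.inl)
  obtain ⟨k, hk⟩ := B.exists_corrected_mean_eq_zero hp2 hpos2 hB (v ∘ Sum.inr)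
  have key : ∀ q : G × H → ℝ, IsProb q → marg1 q = marg1 p → marg2 q = marg2 p →
      IsCentred ((A.prod B).corrected (Sum.elim (A.meanDrift (marg1 p)) (B.meanDrift (marg2 p))) v
        fun z => h z.1 + k z.2) q _ := fun q hq h1 h2 => by
    rw [A.prod_corrected]
    exact IsCentred.prod hq h1 h2 (fun x => A.sqSummable_corrected hp1 hA _ _ _ x)
      (fun y => B.sqSummable_corrected hp2 hB _ _ _ y) hh hk
      (A.sum_corrected_eq_zero hval _ (fun x i => (hA x i).summable hp1) _ _)
  exact ⟨_, _, key p hp rfl rfl, key _ hpp (marg1_prodMul _ hp2) (marg2_prodMul hp1 _)⟩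

end Decoupling

/-- Decoupling: if `Γ₁` admits no nonzero homomorphism onto `ℤ`, then a
coupled aperiodic finite-second-moment random walk on `Γ₁ × Γ₂` decouples in total
variation from the product of its marginals. -/
theorem decoupling_of_no_hom_to_int
    {Γ₁ : Type*} [Group Γ₁] [Countable Γ₁] {Γ₂ : Type*} [Group Γ₂] [Countable Γ₂]
    (hFG₁ : Group.FG Γ₁) (hVA₁ : VirtAbelian Γ₁)
    (hFG₂ : Group.FG Γ₂) (hVA₂ : VirtAbelian Γ₂)
    (ν : Γ₁ × Γ₂ → ℝ) (hν : IsProb ν) (hap : Aperiodic ν) (hmom : FinSecondMoment ν)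
    (hnd : Nondeg ν)
    (hhom : ∀ φ : Γ₁ →* Multiplicative ℤ, ∀ γ : Γ₁, φ γ = 1) :
    Tendsto (fun n : ℕ => tv (convPow ν n)
        (fun p : Γ₁ × Γ₂ => convPow (marg1 ν) n p.1 * convPow (marg2 ν) n p.2))
      atTop (nhds 0) := by
  obtain ⟨Λ₁, _, ι₁, _, ⟨A⟩⟩ := exists_latticeCocycle hFG₁ hVA₁
  obtain ⟨Λ₂, _, ι₂, _, ⟨B⟩⟩ := exists_latticeCocycle hFG₂ hVA₂
  have := Fintype.ofFinite (Γ₁ ⧸ Λ₁)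
  have := Fintype.ofFinite (Γ₂ ⧸ Λ₂)
  have := Fintype.ofFinite ι₁
  have := Fintype.ofFinite ι₂
  exact tendsto_tv_prodMul A B hν (eventuallyPos_of_nondeg hν hap hnd) hmom
    (A.sum_val_eq_zero hhom)

end NSVA
end

section
/- Let μ be a non-degenerate probability measure on Γ with finite second moment, and let ζ := (1/#F)·∑_{x∈Δ}∑_{s∈Γ} μ(s)·α(x,s) ∈ ℝ^m be the drift. Then there exists a constant C > 0 such that for all n ∈ ℕ and all real r > 0, ∑_{γ ∈ Γ : ‖Φ(γ) − n·ζ‖ ≥ r} μ_n(γ) ≤ C·n/r². -/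
open scoped BigOperators Classical
open Filter Matrix MeasureTheory

namespace NSVA

/-- Integrating `g` against a convolution, when the inner integrals are known. -/
lemma hasSum_conv_mul {G : Type*} [Group G] {p μ g q : G → ℝ} (hp : ∀ h, 0 ≤ p h)
    (hμ : ∀ s, 0 ≤ μ s) (hg : ∀ h, 0 ≤ g h)
    (hq : ∀ h, HasSum (fun s => μ s * g (h * s)) (q h))
    (hpq : Summable fun h => p h * q h) :
    HasSum (fun γ => conv p μ γ * g γ) (∑' h, p h * q h) := by
  let F : G × G → ℝ := fun z => p z.1 * (μ z.2 * g (z.1 * z.2))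
  have hF0 : 0 ≤ F := fun z => mul_nonneg (hp _) (mul_nonneg (hμ _) (hg _))
  have hin : ∀ h, HasSum (fun s => F (h, s)) (p h * q h) := fun h => (hq h).mul_left (p h)
  have hFs : Summable F := by
    refine (summable_prod_of_nonneg hF0).2 ⟨fun h => (hin h).summable, ?_⟩
    simpa only [(hin _).tsum_eq] using hpq
  have hFsum : HasSum F (∑' h, p h * q h) := by
    have h := hFs.hasSum
    rw [hFs.tsum_prod] at h
    simpa only [(hin _).tsum_eq] using h
  let e : G × G ≃ G × G :=
    { toFun := fun z => (z.2, z.2⁻¹ * z.1)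
      invFun := fun z => (z.1 * z.2, z.1)
      left_inv := fun z => by simp
      right_inv := fun z => by simp }
  have hFe : HasSum (F ∘ e) (∑' h, p h * q h) := e.hasSum_iff.2 hFsum
  refine hFe.prod_fiberwise fun γ => ?_
  have h1 : (fun h => (F ∘ e) (γ, h)) = fun h => p h * μ (h⁻¹ * γ) * g γ := by
    funext h
    simp [F, e, mul_assoc]
  have h2 : Summable fun h => (F ∘ e) (γ, h) := hFe.summable.prod_factor γ
  have h3 := h2.hasSum
  rw [h1, tsum_mul_right] at h3
  rw [h1]
  exact h3

lemma convPow_nonneg {G : Type*} [Group G] {μ : G → ℝ} (hμ : ∀ g, 0 ≤ μ g) (n : ℕ) (g : G) :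
    0 ≤ convPow μ n g := by
  induction n generalizing g with
  | zero => unfold convPow; split_ifs <;> norm_num
  | succ n ih => exact tsum_nonneg fun h => mul_nonneg (ih h) (hμ _)

lemma hasSum_convPow {G : Type*} [Group G] {μ : G → ℝ} (hμ : IsProb μ) (n : ℕ) :
    HasSum (convPow μ n) 1 := by
  induction n with
  | zero => exact hasSum_ite_eq (1 : G) (1 : ℝ)
  | succ n ih =>
    have h := hasSum_conv_mul (g := fun _ => 1) (q := fun _ => 1) (convPow_nonneg hμ.1 n) hμ.1
      (fun _ => zero_le_one) (fun _ => by simpa using hμ.2) (by simpa using ih.summable)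
    simpa [ih.tsum_eq, convPow] using h

/-- If one step of the random walk increases a nonnegative time-dependent observable by at most
`K` on average, its expectation grows at most linearly. -/
lemma tsum_convPow_mul_le {G : Type*} [Group G] {μ : G → ℝ} (hμ : IsProb μ) {g q : ℕ → G → ℝ}
    {K : ℝ} (hg : ∀ n γ, 0 ≤ g n γ)
    (hq : ∀ n h, HasSum (fun s => μ s * g (n + 1) (h * s)) (q n h))
    (hle : ∀ n h, q n h ≤ g n h + K) (n : ℕ) :
    Summable (fun γ => convPow μ n γ * g n γ) ∧
      ∑' γ, convPow μ n γ * g n γ ≤ g 0 1 + n * K := by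
  induction n with
  | zero =>
    have h : HasSum (fun γ => convPow μ 0 γ * g 0 γ) (g 0 1) := by
      convert hasSum_ite_eq (1 : G) (g 0 1) using 2 with γ
      unfold convPow
      split_ifs with h <;> simp [h]
    exact ⟨h.summable, by simp [h.tsum_eq]⟩
  | succ n ih =>
    have hp := convPow_nonneg hμ.1 n
    have hub : HasSum (fun h => convPow μ n h * (g n h + K))
        (∑' h, convPow μ n h * g n h + 1 * K) := by
      simpa only [mul_add] using ih.1.hasSum.add ((hasSum_convPow hμ n).mul_right K)
    have hq0 : ∀ h, 0 ≤ q n h := fun h =>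
      (hq n h).nonneg fun s => mul_nonneg (hμ.1 s) (hg _ _)
    have hle' : ∀ h, convPow μ n h * q n h ≤ convPow μ n h * (g n h + K) := fun h =>
      mul_le_mul_of_nonneg_left (hle n h) (hp h)
    have hpq : Summable fun h => convPow μ n h * q n h :=
      hub.summable.of_nonneg_of_le (fun h => mul_nonneg (hp h) (hq0 h)) hle'
    have hsum := hasSum_conv_mul hp hμ.1 (hg (n + 1)) (hq n) hpq
    refine ⟨hsum.summable, hsum.tsum_eq.trans_le ?_⟩
    have h := hasSum_le hle' hpq.hasSum hub
    push_cast
    linarith [ih.2]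

/-- Functions dominated by a summable function times a bounded one. -/
lemma summable_mul_of_bounded {S : Type*} {μ c : S → ℝ} {M : ℝ} (hμ : Summable μ)
    (hμ0 : ∀ s, 0 ≤ μ s) (hc : ∀ s, |c s| ≤ M) : Summable fun s => μ s * c s := by
  refine Summable.of_norm_bounded (hμ.mul_right M) fun s => ?_
  rw [Real.norm_eq_abs, abs_mul, abs_of_nonneg (hμ0 s)]
  exact mul_le_mul_of_nonneg_left (hc s) (hμ0 s)

lemma abs_le_sum_abs {X : Type*} [Fintype X] (f : X → ℝ) (x : X) : |f x| ≤ ∑ y, |f y| :=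
  Finset.single_le_sum (f := fun y => |f y|) (fun _ _ => abs_nonneg _) (Finset.mem_univ x)

/-- Solvability of the Poisson equation for an irreducible random walk driven by permutations
of a finite set. -/
lemma exists_poisson_solution {S X : Type*} [Fintype X] [Nonempty X] {μ : S → ℝ}
    (hμ0 : ∀ s, 0 ≤ μ s) (hμ : Summable μ) {σ : S → X → X} (hσ : ∀ s, (σ s).Bijective)
    (hirr : ∀ A : Set X, A.Nonempty → (∀ x ∈ A, ∀ s, 0 < μ s → σ s x ∈ A) → A = Set.univ)
    {b : X → ℝ} (hb : ∑ x, b x = 0) :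
    ∃ f : X → ℝ, ∀ x, HasSum (fun s => μ s * (f (σ s x) - f x)) (b x) := by
  have hs : ∀ (f : X → ℝ) x, Summable fun s => μ s * (f (σ s x) - f x) := fun f x =>
    summable_mul_of_bounded hμ hμ0 (M := ∑ y, |f y| + ∑ y, |f y|) fun s =>
      (abs_sub _ _).trans (add_le_add (abs_le_sum_abs f _) (abs_le_sum_abs f _))
  have hsum0 : ∀ f : X → ℝ, ∑ x, ∑' s, μ s * (f (σ s x) - f x) = 0 := by
    intro f
    rw [← Summable.tsum_finsetSum fun x _ => hs f x]
    have : ∀ s, ∑ x, μ s * (f (σ s x) - f x) = 0 := fun s => by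
      rw [← Finset.mul_sum, Finset.sum_sub_distrib, (hσ s).sum_comp f, sub_self, mul_zero]
    simp [this]
  let T : (X → ℝ) →ₗ[ℝ] (X → ℝ) :=
    { toFun := fun f x => ∑' s, μ s * (f (σ s x) - f x) + ∑ y, f y
      map_add' := fun f g => by
        funext x
        have h : ∑' s, μ s * ((f + g) (σ s x) - (f + g) x)
            = ∑' s, μ s * (f (σ s x) - f x) + ∑' s, μ s * (g (σ s x) - g x) := by
          rw [← (hs f x).tsum_add (hs g x)]
          refine tsum_congr fun s => ?_
          simp only [Pi.add_apply]
          ring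
        rw [h]
        simp only [Pi.add_apply, Finset.sum_add_distrib]
        ring
      map_smul' := fun c f => by
        funext x
        have h : ∑' s, μ s * ((c • f) (σ s x) - (c • f) x)
            = c * ∑' s, μ s * (f (σ s x) - f x) := by
          rw [← tsum_mul_left]
          refine tsum_congr fun s => ?_
          simp only [Pi.smul_apply, smul_eq_mul]
          ring
        rw [h]
        simp only [Pi.smul_apply, smul_eq_mul, ← Finset.mul_sum, RingHom.id_apply]
        ring }
  have hT : ∀ f x, T f x = ∑' s, μ s * (f (σ s x) - f x) + ∑ y, f y := fun _ _ => rfl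
  have hcard : (Fintype.card X : ℝ) ≠ 0 := by exact_mod_cast Fintype.card_ne_zero
  have hmass : ∀ f : X → ℝ, ∑ x, T f x = 0 → ∑ y, f y = 0 := by
    intro f hf
    simp only [hT, Finset.sum_add_distrib, hsum0, zero_add, Finset.sum_const, Finset.card_univ,
      nsmul_eq_mul] at hf
    exact (mul_eq_zero.1 hf).resolve_left hcard
  have hinj : Function.Injective T := by
    refine (injective_iff_map_eq_zero T).2 fun f hf => ?_
    have hf0 : ∑ y, f y = 0 := hmass f (by simp [hf])
    have hharm : ∀ x, HasSum (fun s => μ s * (f x - f (σ s x))) 0 := fun x => by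
      have h := congrFun hf x
      rw [hT, hf0, add_zero, Pi.zero_apply] at h
      have h' := (hs f x).hasSum.neg
      rw [h, neg_zero] at h'
      refine h'.congr_fun fun s => ?_
      ring
    have hA : {x | ∀ y, f y ≤ f x} = Set.univ := by
      refine hirr _ (Finite.exists_max f) fun x hx s hs y => ?_
      have h := congrFun ((hasSum_zero_iff_of_nonneg fun t =>
        mul_nonneg (hμ0 t) (sub_nonneg.2 (hx (σ t x)))).1 (hharm x)) s
      have h0 : f x = f (σ s x) :=
        sub_eq_zero.1 ((mul_eq_zero.1 h).resolve_left hs.ne')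
      exact h0 ▸ hx y
    have hmax : ∀ x y, f y ≤ f x := fun x => (Set.eq_univ_iff_forall.1 hA) x
    funext x
    have hc : ∑ y, f y = ∑ _y : X, f x :=
      Finset.sum_congr rfl fun y _ => le_antisymm (hmax x y) (hmax y x)
    rw [hf0, Finset.sum_const, Finset.card_univ, nsmul_eq_mul] at hc
    exact (mul_eq_zero.1 hc.symm).resolve_left hcard
  obtain ⟨f, hf⟩ := LinearMap.injective_iff_surjective.1 hinj b
  have hf0 : ∑ y, f y = 0 := hmass f (by simp [hf, hb])
  refine ⟨f, fun x => ?_⟩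
  have h := congrFun hf x
  rw [hT, hf0, add_zero] at h
  exact h ▸ (hs f x).hasSum

namespace RepSystem

variable {Γ : Type*} [Group Γ] {Λ : Subgroup Γ}

lemma rep_rep_mul (R : RepSystem Λ) (γ s : Γ) : R.rep (R.rep γ * s) = R.rep (γ * s) := by
  rw [← R.rep_coset (R.rep γ * s) _ (R.rep_spec γ)]
  congr 1
  group

lemma rep_eq_rep_iff (R : RepSystem Λ) {γ δ : Γ} : R.rep γ = R.rep δ ↔ γ * δ⁻¹ ∈ Λ := by
  constructor
  · intro h
    have h' := Λ.mul_mem (R.rep_spec γ) (Λ.inv_mem (R.rep_spec δ))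
    rw [h] at h'
    simpa [mul_assoc] using h'
  · intro h
    simpa using R.rep_coset δ _ h

/-- The right action of `Γ` on the representatives. -/
def act (R : RepSystem Λ) (s : Γ) (x : R.Δ) : R.Δ := ⟨R.rep (x * s), R.rep_mem _⟩

lemma act_mul (R : RepSystem Λ) (s t : Γ) (x : R.Δ) : R.act (s * t) x = R.act t (R.act s x) :=
  Subtype.ext (by simp [act, rep_rep_mul, mul_assoc])

lemma act_bijective (R : RepSystem Λ) (s : Γ) : (R.act s).Bijective := by
  have h1 : ∀ x, R.act 1 x = x := fun x =>
    Subtype.ext (by simpa [act] using R.rep_idem x x.2)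
  exact Function.bijective_iff_has_inverse.2
    ⟨R.act s⁻¹, fun x => by rw [← act_mul, mul_inv_cancel, h1],
      fun x => by rw [← act_mul, inv_mul_cancel, h1]⟩

lemma act_irreducible (R : RepSystem Λ) {μ : Γ → ℝ} (hnd : Nondeg μ) {A : Set R.Δ}
    (hA : A.Nonempty) (hs : ∀ x ∈ A, ∀ s, 0 < μ s → R.act s x ∈ A) : A = Set.univ := by
  obtain ⟨x, hx⟩ := hA
  have hall : ∀ g : Γ, ∀ x ∈ A, R.act g x ∈ A := fun g =>
    Subsemigroup.closure_induction (p := fun g _ => ∀ x ∈ A, R.act g x ∈ A)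
      (fun s hs' x hx => hs x hx s hs')
      (fun s t _ _ h1 h2 x hx => by rw [act_mul]; exact h2 _ (h1 x hx)) (hnd g)
  refine Set.eq_univ_of_forall fun y => ?_
  have h := hall ((x : Γ)⁻¹ * y) x hx
  have hy : R.act ((x : Γ)⁻¹ * y) x = y :=
    Subtype.ext (by simpa [act] using R.rep_idem y y.2)
  rwa [hy] at h

lemma card_eq_index (R : RepSystem Λ) : R.Δ.card = Λ.index := by
  rw [Subgroup.index, ← Nat.card_eq_finsetCard]
  refine Nat.card_congr (Equiv.ofBijective (fun x : R.Δ => (((x : Γ)⁻¹ : Γ) : Γ ⧸ Λ)) ⟨?_, ?_⟩)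
  · intro x y hxy
    have h := QuotientGroup.eq.1 hxy
    rw [inv_inv, ← R.rep_eq_rep_iff, R.rep_idem x x.2, R.rep_idem y y.2] at h
    exact Subtype.ext h
  · intro z
    induction z using QuotientGroup.induction_on with
    | H g =>
      refine ⟨⟨R.rep g⁻¹, R.rep_mem _⟩, QuotientGroup.eq.2 ?_⟩
      have h := Λ.inv_mem (R.rep_spec g⁻¹)
      simpa using h

end RepSystem

section Cocycle

variable {Γ : Type*} [Group Γ] {Λ : Subgroup Γ} {m : ℕ}

lemma Phi_mul (ψ : Λ ≃* Multiplicative (Fin m → ℤ)) (R : RepSystem Λ) (γ s : Γ) :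
    Phi ψ R (γ * s) = Phi ψ R γ + cocycle ψ R (R.rep γ) s := by
  unfold Phi cocycle
  rw [← toAdd_mul, ← map_mul]
  congr 2
  refine Subtype.ext ?_
  simp [R.rep_rep_mul, mul_assoc]

lemma Phi_of_mem (ψ : Λ ≃* Multiplicative (Fin m → ℤ)) (R : RepSystem Λ) {x : Γ}
    (hx : x ∈ R.Δ) : Phi ψ R x = 0 := by
  have h : (⟨x * (R.rep x)⁻¹, R.rep_spec x⟩ : Λ) = 1 :=
    Subtype.ext (by simp [R.rep_idem x hx])
  rw [Phi, h, map_one, toAdd_one]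

lemma cocycle_mul (ψ : Λ ≃* Multiplicative (Fin m → ℤ)) (R : RepSystem Λ) (x s t : Γ) :
    cocycle ψ R x (s * t) = cocycle ψ R x s + cocycle ψ R (R.rep (x * s)) t := by
  have h := Phi_mul ψ R (x * s) t
  rw [mul_assoc] at h
  exact h

lemma exists_list_prod_eq {G : Type*} [Group G] {S₀ : Finset G} (hsym : ∀ s ∈ S₀, s⁻¹ ∈ S₀)
    (hgen : Subgroup.closure (S₀ : Set G) = ⊤) (g : G) :
    ∃ l : List G, (∀ s ∈ l, s ∈ S₀) ∧ l.length = wordLength S₀ g ∧ l.prod = g := by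
  refine Nat.sInf_mem (s := {n | ∃ l : List G, (∀ s ∈ l, s ∈ S₀) ∧ l.length = n ∧ l.prod = g}) ?_
  have hinv : (S₀ : Set G)⁻¹ ⊆ S₀ := fun s hs => by simpa using hsym _ hs
  have hg : g ∈ Submonoid.closure (S₀ : Set G) := by
    rw [← Set.union_eq_self_of_subset_right hinv, ← Subgroup.closure_toSubmonoid, hgen]
    exact Submonoid.mem_top g
  obtain ⟨l, hl, hlg⟩ := Submonoid.exists_list_of_mem_closure hg
  exact ⟨l.length, l, hl, rfl, hlg⟩

/-- The cocycle grows at most linearly in the word length. -/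
lemma exists_cocycle_bound (ψ : Λ ≃* Multiplicative (Fin m → ℤ)) (R : RepSystem Λ)
    {S₀ : Finset Γ} (hsym : ∀ s ∈ S₀, s⁻¹ ∈ S₀) (hgen : Subgroup.closure (S₀ : Set Γ) = ⊤)
    (i : Fin m) :
    ∃ L : ℝ, ∀ x ∈ R.Δ, ∀ s, |(cocycle ψ R x s i : ℝ)| ≤ L * wordLength S₀ s := by
  let L : ℝ := ∑ x ∈ R.Δ, ∑ s ∈ S₀, |(cocycle ψ R x s i : ℝ)|
  have hL : ∀ x ∈ R.Δ, ∀ s ∈ S₀, |(cocycle ψ R x s i : ℝ)| ≤ L := fun x hx s hs =>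
    (Finset.single_le_sum (f := fun s => |(cocycle ψ R x s i : ℝ)|)
      (fun _ _ => abs_nonneg _) hs).trans
    (Finset.single_le_sum (f := fun x => ∑ s ∈ S₀, |(cocycle ψ R x s i : ℝ)|)
      (fun _ _ => Finset.sum_nonneg fun _ _ => abs_nonneg _) hx)
  have hlist : ∀ l : List Γ, (∀ s ∈ l, s ∈ S₀) → ∀ x ∈ R.Δ,
      |(cocycle ψ R x l.prod i : ℝ)| ≤ L * l.length := by
    intro l
    induction l with
    | nil =>
      intro _ x hx
      have h : cocycle ψ R x 1 = 0 := by
        have h' := Phi_of_mem ψ R hx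
        rw [← mul_one x] at h'
        exact h'
      simp [h]
    | cons a l ih =>
      intro hl x hx
      have h1 := hL x hx a (hl a (by simp))
      have h2 := ih (fun s hs => hl s (by simp [hs])) _ (R.rep_mem (x * a))
      rw [List.prod_cons, cocycle_mul, Pi.add_apply, List.length_cons]
      push_cast
      linarith [abs_add_le (cocycle ψ R x a i : ℝ) (cocycle ψ R (R.rep (x * a)) l.prod i)]
  refine ⟨L, fun x hx s => ?_⟩
  obtain ⟨l, hl, hlen, rfl⟩ := exists_list_prod_eq hsym hgen s
  rw [← hlen]
  exact hlist l hl x hx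

lemma summable_cocycle_sq (ψ : Λ ≃* Multiplicative (Fin m → ℤ)) (R : RepSystem Λ) {μ : Γ → ℝ}
    (hμ : ∀ s, 0 ≤ μ s) (hmom : FinSecondMoment μ) {x : Γ} (hx : x ∈ R.Δ) (i : Fin m) :
    Summable fun s => μ s * (cocycle ψ R x s i : ℝ) ^ 2 := by
  obtain ⟨S₀, hsym, hgen, hsum⟩ := hmom
  obtain ⟨L, hL⟩ := exists_cocycle_bound ψ R hsym hgen i
  refine (hsum.mul_left (L ^ 2)).of_nonneg_of_le
    (fun s => mul_nonneg (hμ s) (sq_nonneg _)) fun s => ?_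
  have h := sq_le_sq' (abs_le.1 (hL x hx s)).1 (abs_le.1 (hL x hx s)).2
  calc μ s * (cocycle ψ R x s i : ℝ) ^ 2 ≤ μ s * (L * wordLength S₀ s) ^ 2 :=
        mul_le_mul_of_nonneg_left h (hμ s)
    _ = L ^ 2 * ((wordLength S₀ s : ℝ) ^ 2 * μ s) := by ring

lemma summable_mul_of_summable_mul_sq {S : Type*} {μ a : S → ℝ} (hμ0 : ∀ s, 0 ≤ μ s)
    (hμ : Summable μ) (ha : Summable fun s => μ s * a s ^ 2) : Summable fun s => μ s * a s := by
  refine Summable.of_norm_bounded (hμ.add ha) fun s => ?_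
  rw [Real.norm_eq_abs, abs_mul, abs_of_nonneg (hμ0 s)]
  have h : |a s| ≤ 1 + a s ^ 2 := by nlinarith [sq_abs (a s), sq_nonneg (|a s| - 1)]
  nlinarith [mul_le_mul_of_nonneg_left h (hμ0 s)]

/-- The corrector making each coordinate of `Φ` a martingale after centring by the drift. -/
lemma exists_corrector (hI : Λ.index ≠ 0) (ψ : Λ ≃* Multiplicative (Fin m → ℤ))
    (R : RepSystem Λ) {μ : Γ → ℝ} (hμ : IsProb μ) (hnd : Nondeg μ) (hmom : FinSecondMoment μ)
    (i : Fin m) :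
    ∃ f : R.Δ → ℝ, ∀ x : R.Δ, HasSum (fun s => μ s *
      ((cocycle ψ R x s i : ℝ) + (f (R.act s x) - f x) - drift ψ R μ i)) 0 := by
  have hα : ∀ x : R.Δ, Summable fun s => μ s * (cocycle ψ R x s i : ℝ) := fun x =>
    summable_mul_of_summable_mul_sq hμ.1 hμ.2.summable (summable_cocycle_sq ψ R hμ.1 hmom x.2 i)
  have : Nonempty R.Δ := ⟨⟨1, R.one_mem⟩⟩
  have hb : ∑ x : R.Δ, (drift ψ R μ i - ∑' s, μ s * (cocycle ψ R x s i : ℝ)) = 0 := by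
    have hI' : (Λ.index : ℝ) ≠ 0 := by exact_mod_cast hI
    rw [Finset.sum_sub_distrib, Finset.sum_const, Finset.card_univ, Fintype.card_coe,
      R.card_eq_index, nsmul_eq_mul, drift, mul_inv_cancel_left₀ hI', sub_eq_zero]
    exact (Finset.sum_coe_sort R.Δ fun x => ∑' s, μ s * (cocycle ψ R x s i : ℝ)).symm
  obtain ⟨f, hf⟩ := exists_poisson_solution hμ.1 hμ.2.summable R.act_bijective
    (fun A hA h => R.act_irreducible hnd hA h) hb
  refine ⟨f, fun x => ?_⟩
  have h := ((hα x).hasSum.add (hf x)).sub (hμ.2.mul_right (drift ψ R μ i))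
  rw [one_mul, add_sub_cancel, sub_self] at h
  refine h.congr_fun fun s => ?_
  ring

/-- Coordinatewise variance bound. -/
lemma exists_variance_bound (hI : Λ.index ≠ 0) (ψ : Λ ≃* Multiplicative (Fin m → ℤ))
    (R : RepSystem Λ) {μ : Γ → ℝ} (hμ : IsProb μ) (hnd : Nondeg μ) (hmom : FinSecondMoment μ)
    (i : Fin m) :
    ∃ K : ℝ, 0 ≤ K ∧ ∀ n : ℕ,
      Summable (fun γ => convPow μ n γ * ((Phi ψ R γ i : ℝ) - n * drift ψ R μ i) ^ 2) ∧
      ∑' γ, convPow μ n γ * ((Phi ψ R γ i : ℝ) - n * drift ψ R μ i) ^ 2 ≤ K * (n + 1) := by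
  obtain ⟨f, hf⟩ := exists_corrector hI ψ R hμ hnd hmom i
  set ζ := drift ψ R μ i
  let D : R.Δ → Γ → ℝ := fun x s => (cocycle ψ R x s i : ℝ) + (f (R.act s x) - f x) - ζ
  let B : ℝ := ∑ y, |f y|
  have hB : ∀ x, |f x| ≤ B := abs_le_sum_abs f
  have hD2 : ∀ x, Summable fun s => μ s * D x s ^ 2 := fun x => by
    refine (((summable_cocycle_sq ψ R hμ.1 hmom x.2 i).mul_left 2).add
      (hμ.2.summable.mul_right (2 * (B + B + |ζ|) ^ 2))).of_nonneg_of_le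
      (fun s => mul_nonneg (hμ.1 s) (sq_nonneg _)) fun s => ?_
    have hc : |f (R.act s x) - f x - ζ| ≤ B + B + |ζ| :=
      (abs_sub _ _).trans (by linarith [abs_sub (f (R.act s x)) (f x), hB (R.act s x), hB x])
    have hc2 := sq_le_sq' (abs_le.1 hc).1 (abs_le.1 hc).2
    have h : D x s ^ 2 ≤ 2 * (cocycle ψ R x s i : ℝ) ^ 2 + 2 * (B + B + |ζ|) ^ 2 := by
      have hD : D x s = (cocycle ψ R x s i : ℝ) + (f (R.act s x) - f x - ζ) := by
        simp only [D]; ring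
      rw [hD]
      linarith [add_sq_le (a := (cocycle ψ R x s i : ℝ)) (b := f (R.act s x) - f x - ζ)]
    calc μ s * D x s ^ 2
        ≤ μ s * (2 * (cocycle ψ R x s i : ℝ) ^ 2 + 2 * (B + B + |ζ|) ^ 2) :=
          mul_le_mul_of_nonneg_left h (hμ.1 s)
      _ = _ := by ring
  let V : R.Δ → ℝ := fun x => ∑' s, μ s * D x s ^ 2
  have hV0 : ∀ x, 0 ≤ V x := fun x => tsum_nonneg fun s => mul_nonneg (hμ.1 s) (sq_nonneg _)
  have hV : ∀ x, V x ≤ ∑ y, V y := fun x =>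
    Finset.single_le_sum (fun y _ => hV0 y) (Finset.mem_univ x)
  let ρ : Γ → R.Δ := fun γ => ⟨R.rep γ, R.rep_mem γ⟩
  have hρ : ∀ γ s, ρ (γ * s) = R.act s (ρ γ) := fun γ s =>
    Subtype.ext (R.rep_rep_mul γ s).symm
  let M : ℕ → Γ → ℝ := fun n γ => (Phi ψ R γ i : ℝ) + f (ρ γ) - n * ζ
  have hM : ∀ n γ s, M (n + 1) (γ * s) = M n γ + D (ρ γ) s := fun n γ s => by
    simp only [M, D, hρ, Phi_mul, Pi.add_apply]
    push_cast
    ring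
  have hstep : ∀ n γ, HasSum (fun s => μ s * M (n + 1) (γ * s) ^ 2) (M n γ ^ 2 + V (ρ γ)) :=
    fun n γ => by
      have h := ((hμ.2.mul_right (M n γ ^ 2)).add ((hf (ρ γ)).mul_right (2 * M n γ))).add
        (hD2 (ρ γ)).hasSum
      rw [one_mul, zero_mul, add_zero] at h
      refine h.congr_fun fun s => ?_
      rw [hM]
      simp only [D]
      ring
  have hgrow := tsum_convPow_mul_le hμ (g := fun n γ => M n γ ^ 2) (K := ∑ y, V y)
    (fun n γ => sq_nonneg _) hstep (fun n γ => by linarith [hV (ρ γ)])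
  have hW0 : 0 ≤ ∑ y, V y := Finset.sum_nonneg fun y _ => hV0 y
  refine ⟨2 * M 0 1 ^ 2 + 2 * ∑ y, V y + 2 * B ^ 2, by positivity, fun n => ?_⟩
  obtain ⟨hs, hle⟩ := hgrow n
  have hpt : ∀ γ, convPow μ n γ * ((Phi ψ R γ i : ℝ) - n * ζ) ^ 2 ≤
      2 * (convPow μ n γ * M n γ ^ 2) + convPow μ n γ * (2 * B ^ 2) := fun γ => by
    have h1 : ((Phi ψ R γ i : ℝ) - n * ζ) = M n γ + - f (ρ γ) := by simp only [M]; ring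
    have h2 := sq_le_sq' (abs_le.1 (hB (ρ γ))).1 (abs_le.1 (hB (ρ γ))).2
    have h3 : ((Phi ψ R γ i : ℝ) - n * ζ) ^ 2 ≤ 2 * M n γ ^ 2 + 2 * B ^ 2 := by
      rw [h1]
      have := add_sq_le (a := M n γ) (b := - f (ρ γ))
      rw [neg_sq] at this
      linarith
    linarith [mul_le_mul_of_nonneg_left h3 (convPow_nonneg hμ.1 n γ)]
  have hub := (hs.hasSum.mul_left 2).add ((hasSum_convPow hμ n).mul_right (2 * B ^ 2))
  have hsum := hub.summable.of_nonneg_of_le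
    (fun γ => mul_nonneg (convPow_nonneg hμ.1 n γ) (sq_nonneg _)) hpt
  refine ⟨hsum, (hasSum_le hpt hsum.hasSum hub).trans ?_⟩
  have hn : (0 : ℝ) ≤ n := Nat.cast_nonneg n
  nlinarith [mul_nonneg hn (sq_nonneg (M 0 1)), mul_nonneg hn (sq_nonneg B)]

end Cocycle

/-- Concentration: `P(‖Φ(w_n) − nζ‖ ≥ r) ≤ C·n/r²`. -/
theorem concentration_around_drift
    {Γ : Type*} [Group Γ] [Countable Γ] {Λ : Subgroup Γ} (hN : Λ.Normal)
    (hI : Λ.index ≠ 0) {m : ℕ} (hm : 1 ≤ m) (ψ : Λ ≃* Multiplicative (Fin m → ℤ))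
    (R : RepSystem Λ) (μ : Γ → ℝ) (hμ : IsProb μ) (hnd : Nondeg μ)
    (hmom : FinSecondMoment μ) :
    ∃ C : ℝ, 0 < C ∧ ∀ (n : ℕ) (r : ℝ), 0 < r →
      (∑' γ : {γ : Γ //
          r ≤ Real.sqrt (∑ i, ((Phi ψ R γ i : ℝ) - n * drift ψ R μ i) ^ 2)},
        convPow μ n (γ : Γ)) ≤ C * n / r ^ 2 := by
  choose K hK0 hK using exists_variance_bound hI ψ R hμ hnd hmom
  refine ⟨2 * ∑ i, K i + 1, by linarith [Finset.sum_nonneg fun i (_ : i ∈ Finset.univ) => hK0 i],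
    fun n r hr => ?_⟩
  let N : Γ → ℝ := fun γ => ∑ i, ((Phi ψ R γ i : ℝ) - n * drift ψ R μ i) ^ 2
  rcases Nat.eq_zero_or_pos n with rfl | hn
  · have h0 : ∀ γ : {γ : Γ // r ≤ Real.sqrt (N γ)}, convPow μ 0 (γ : Γ) = 0 := by
      rintro ⟨γ, hγ⟩
      refine if_neg ?_
      rintro rfl
      simp [N, Phi_of_mem ψ R R.one_mem] at hγ
      linarith
    have h1 : ∑' γ : {γ : Γ // r ≤ Real.sqrt (N γ)}, convPow μ 0 (γ : Γ) = 0 := by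
      simp only [h0, tsum_zero]
    simpa using h1.le
  have hp := convPow_nonneg hμ.1 n
  have hN0 : ∀ γ, 0 ≤ N γ := fun γ => Finset.sum_nonneg fun i _ => sq_nonneg _
  have hNs : HasSum (fun γ => convPow μ n γ * N γ)
      (∑ i, ∑' γ, convPow μ n γ * ((Phi ψ R γ i : ℝ) - n * drift ψ R μ i) ^ 2) := by
    simpa only [N, Finset.mul_sum] using hasSum_sum fun i _ => (hK i n).1.hasSum
  have hle : ∀ γ : {γ : Γ // r ≤ Real.sqrt (N γ)},
      convPow μ n (γ : Γ) ≤ convPow μ n (γ : Γ) * N γ / r ^ 2 := fun γ => by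
    have h : r ^ 2 ≤ N γ := (Real.le_sqrt hr.le (hN0 _)).1 γ.2
    rw [le_div_iff₀ (by positivity)]
    exact mul_le_mul_of_nonneg_left h (hp _)
  have hS : Summable fun γ => convPow μ n γ * N γ / r ^ 2 := hNs.summable.div_const _
  have hn1 : (1 : ℝ) ≤ n := by exact_mod_cast hn
  calc ∑' γ : {γ : Γ // r ≤ Real.sqrt (N γ)}, convPow μ n (γ : Γ)
      ≤ ∑' γ : {γ : Γ // r ≤ Real.sqrt (N γ)}, convPow μ n (γ : Γ) * N γ / r ^ 2 :=
        ((hasSum_convPow hμ n).summable.subtype _).tsum_le_tsum hle (hS.subtype _)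
    _ ≤ ∑' γ, convPow μ n γ * N γ / r ^ 2 :=
        hS.tsum_subtype_le _ {γ : Γ | r ≤ Real.sqrt (N γ)} fun γ =>
          div_nonneg (mul_nonneg (hp γ) (hN0 γ)) (sq_nonneg r)
    _ = (∑ i, ∑' γ, convPow μ n γ * ((Phi ψ R γ i : ℝ) - n * drift ψ R μ i) ^ 2) / r ^ 2 := by
        rw [tsum_div_const, hNs.tsum_eq]
    _ ≤ (2 * ∑ i, K i + 1) * n / r ^ 2 := by
        gcongr
        calc _ ≤ ∑ i, K i * (n + 1) := Finset.sum_le_sum fun i _ => (hK i n).2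
          _ = (∑ i, K i) * (n + 1) := by rw [Finset.sum_mul]
          _ ≤ _ := by nlinarith [Finset.sum_nonneg fun i (_ : i ∈ Finset.univ) => hK0 i]

end NSVA
end
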